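/- arXiv:1607.00025 — 3 statements merged into one kernel-verified Lean document; each statement's English description precedes it below -/
import Mathlib

section
/- Let R be a Noetherian local domain which is not a field, with maximal ideal 𝔪. Then there exists an element a ∈ 𝔪 such that a does not have a square root in the fraction field Frac(R). -/
/-!
Every element of `Frac R` is a quotient of two elements of `𝔪`, so if all elements of `𝔪` had
square roots in `Frac R`, every element of `Frac R` would be a `2 ^ k`-th power for every `k`.
This is incompatible with a nontrivial multiplicative map `Frac R → ℤᵐ⁰`. Such a map exists: take
a prime `p` minimal over a nonzero principal ideal `(a)` with `a ∈ 𝔪`. By Krull's principal ideal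
theorem `R_p` is a Noetherian domain of dimension at most one, so the order of vanishing
`x ↦ length (R_p / x R_p)` is finite on nonzero elements and extends multiplicatively to the
fraction field, and it is positive at `a`, which is not a unit of `R_p`.
-/

/-- If every element of the maximal ideal is a square in the fraction field, then so is every
element of the fraction field: multiply numerator and denominator by some `c ≠ 0` in `𝔪`. -/
lemma exists_sq_eq_of_maximalIdeal {R K : Type*} [CommRing R] [IsDomain R] [IsLocalRing R]
    [Field K] [Algebra R K] [IsFractionRing R K] (hR : ¬IsField R)
    (h : ∀ a ∈ IsLocalRing.maximalIdeal R, ∃ q : K, q ^ 2 = algebraMap R K a) (x : K) :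
    ∃ q : K, q ^ 2 = x := by
  obtain ⟨c, hc, hc0⟩ := Submodule.exists_mem_ne_zero_of_ne_bot
    (IsLocalRing.isField_iff_maximalIdeal_eq.not.mp hR)
  obtain ⟨r, s, -, rfl⟩ := IsFractionRing.div_surjective (A := R) x
  obtain ⟨u, hu⟩ := h (r * c) (Ideal.mul_mem_left _ _ hc)
  obtain ⟨v, hv⟩ := h (s * c) (Ideal.mul_mem_left _ _ hc)
  refine ⟨u / v, ?_⟩
  have : algebraMap R K c ≠ 0 := by simpa using hc0
  rw [div_pow, hu, hv, map_mul, map_mul, mul_div_mul_right _ _ this]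

lemma exists_pow_two_pow_eq {K : Type*} [Monoid K] (h : ∀ x : K, ∃ q : K, q ^ 2 = x) (k : ℕ)
    (x : K) : ∃ q : K, q ^ (2 ^ k) = x := by
  induction k generalizing x with
  | zero => exact ⟨x, by simp⟩
  | succ k ih =>
    obtain ⟨y, rfl⟩ := h x
    obtain ⟨q, rfl⟩ := ih y
    exact ⟨q, by rw [pow_succ, pow_mul]⟩

/-- A multiplicative map to `ℤᵐ⁰` is trivial on nonzero elements if every element of the source
is a square: its logarithm at `x` is divisible by all powers of `2`. At
`x = 0` the statement is the convention `log 0 = 0`. -/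
lemma log_map_eq_zero_of_exists_sq {K : Type*} [Field K] (w : K →*₀ WithZero (Multiplicative ℤ))
    (h : ∀ x : K, ∃ q : K, q ^ 2 = x) (x : K) : WithZero.log (w x) = 0 := by
  obtain ⟨q, hq⟩ := exists_pow_two_pow_eq h (WithZero.log (w x)).natAbs x
  have hdvd : (2 : ℤ) ^ (WithZero.log (w x)).natAbs ∣ WithZero.log (w x) := by
    refine ⟨WithZero.log (w q), ?_⟩
    conv_lhs => rw [← hq, map_pow, WithZero.log_pow]
    simp
  refine Int.eq_zero_of_abs_lt_dvd hdvd ?_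
  rw [Int.abs_eq_natAbs]
  exact_mod_cast Nat.lt_two_pow_self

/-- In a Noetherian domain of dimension at most one the order of vanishing takes a nontrivial value
at every nonzero nonunit, because the quotient by it is a nonzero module of finite length. -/
lemma log_ordFrac_ne_zero {A K : Type*} [CommRing A] [IsDomain A] [IsNoetherianRing A]
    [Ring.KrullDimLE 1 A] [Field K] [Algebra A K] [IsFractionRing A K] {a : A} (h0 : a ≠ 0)
    (hu : ¬IsUnit a) : WithZero.log (Ring.ordFrac A (algebraMap A K a)) ≠ 0 := by
  obtain ⟨n, hn⟩ := ENat.ne_top_iff_exists.mp (Ring.ord_ne_top (mem_nonZeroDivisors_of_ne_zero h0))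
  rw [Ring.ordFrac_eq_ord A h0,
    Ring.ordMonoidWithZeroHom_eq_coe A (mem_nonZeroDivisors_of_ne_zero h0) hn.symm]
  intro hlog
  have hn0 : n = 0 := by
    change WithZero.log (WithZero.exp (n : ℤ)) = 0 at hlog
    rwa [WithZero.log_exp, Nat.cast_eq_zero] at hlog
  rw [hn0, Ring.ord, Nat.cast_zero, eq_comm, Module.length_eq_zero_iff,
    Ideal.Quotient.subsingleton_iff, Ideal.span_singleton_eq_top] at hn
  exact hu hn

/-- The fraction field `K` of a domain `R` is not closed under square roots as soon as `R` embeds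
into a Noetherian domain `A` of dimension at most one in which some nonzero element of `R` is not
a unit: `K` maps to the fraction field `L` of `A`, on which the order of vanishing is defined. -/
lemma not_forall_exists_sq_of_isFractionRing {R A K : Type*} (L : Type*) [CommRing R] [IsDomain R]
    [CommRing A] [IsDomain A] [IsNoetherianRing A] [Ring.KrullDimLE 1 A] [Algebra R A]
    [Field K] [Algebra R K] [IsFractionRing R K] [Field L] [Algebra A L] [IsFractionRing A L]
    (hinj : Function.Injective (algebraMap R A)) {a : R} (ha0 : a ≠ 0)
    (hau : ¬IsUnit (algebraMap R A a)) : ¬∀ x : K, ∃ q, q ^ 2 = x := by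
  intro hsq
  have hinjL : Function.Injective ((algebraMap A L).comp (algebraMap R A)) :=
    (IsFractionRing.injective A L).comp hinj
  let φ : K →+* L := IsFractionRing.lift hinjL
  have hφ : φ (algebraMap R K a) = algebraMap A L (algebraMap R A a) :=
    IsFractionRing.lift_algebraMap hinjL a
  have hlog := log_map_eq_zero_of_exists_sq
    ((Ring.ordFrac A (K := L)).comp φ.toMonoidWithZeroHom) hsq (algebraMap R K a)
  refine log_ordFrac_ne_zero (K := L) ((map_ne_zero_iff _ hinj).mpr ha0) hau ?_
  rw [← hφ]
  exact hlog

lemma not_forall_exists_sq {R A K : Type*} [CommRing R] [IsDomain R]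
    [CommRing A] [IsDomain A] [IsNoetherianRing A] [Ring.KrullDimLE 1 A] [Algebra R A]
    [Field K] [Algebra R K] [IsFractionRing R K]
    (hinj : Function.Injective (algebraMap R A)) {a : R} (ha0 : a ≠ 0)
    (hau : ¬IsUnit (algebraMap R A a)) : ¬∀ x : K, ∃ q, q ^ 2 = x :=
  not_forall_exists_sq_of_isFractionRing (FractionRing A) hinj ha0 hau

/-- A Noetherian local domain that is not a field contains an element of
the maximal ideal without a square root in its fraction field. -/
theorem stmt_6 (R : Type*) [CommRing R] [IsDomain R] [IsNoetherianRing R] [IsLocalRing R]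
    (hR : ¬IsField R) :
    ∃ a ∈ IsLocalRing.maximalIdeal R,
      ¬∃ q : FractionRing R, q ^ 2 = algebraMap R (FractionRing R) a := by
  by_contra! hcon
  have hsq := exists_sq_eq_of_maximalIdeal hR hcon
  obtain ⟨a, ha, ha0⟩ := Submodule.exists_mem_ne_zero_of_ne_bot
    (IsLocalRing.isField_iff_maximalIdeal_eq.not.mp hR)
  have hau : ¬IsUnit a := ha
  obtain ⟨p, hp⟩ := (Ideal.span {a}).nonempty_minimalPrimes
    (by rwa [Ne, Ideal.span_singleton_eq_top])
  have hprime : p.IsPrime := hp.1.1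
  have hap : a ∈ p := hp.1.2 (Ideal.mem_span_singleton_self a)
  have : IsDomain (Localization.AtPrime p) :=
    IsLocalization.isDomain_localization p.primeCompl_le_nonZeroDivisors
  have : IsNoetherianRing (Localization.AtPrime p) :=
    IsLocalization.isNoetherianRing p.primeCompl (Localization.AtPrime p) inferInstance
  have : Ring.KrullDimLE 1 (Localization.AtPrime p) := by
    rw [Ring.KrullDimLE, Order.krullDimLE_iff]
    change ringKrullDim (Localization.AtPrime p) ≤ _
    rw [IsLocalization.AtPrime.ringKrullDim_eq_height p (Localization.AtPrime p)]
    exact_mod_cast Ideal.height_le_one_of_isPrincipal_of_mem_minimalPrimes _ p hp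
  have hinj : Function.Injective (algebraMap R (Localization.AtPrime p)) :=
    IsLocalization.injective (Localization.AtPrime p) p.primeCompl_le_nonZeroDivisors
  exact not_forall_exists_sq hinj ha0
    (fun h ↦ (IsLocalization.AtPrime.isUnit_to_map_iff (Localization.AtPrime p) p a).mp h hap) hsq
end

section
/- Let (R, 𝔪) be a Noetherian local ring of dimension d > 0 and x₁, …, x_d a system of parameters. If 𝔪·(((x₁^{t+1},…,x_d^{t+1}) : x₁^t⋯x_d^t)) ⊆ (x₁,…,x_d) for all t ≥ 1, then x₁^t⋯x_d^t ∉ (x₁^{t+1},…,x_d^{t+1}) for all t ≥ 1 (the Monomial Conjecture holds for this system of parameters). -/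
/-!
If the monomial `x₁^t⋯x_d^t` lies in `(x₁^{t+1},…,x_d^{t+1})` for a single `t ≥ 1`, then the colon
ideal is the unit ideal, so the hypothesis gives `𝔪 ⊆ (x₁,…,x_d)`. Thus `𝔪` is generated by
`d = dim R` elements, i.e. `R` is a regular local ring, and for such a ring the membership is
impossible:

* `isDomain_and_isWeaklyRegular`: `R` is a domain and `x₁,…,x_d` is a regular sequence. By induction
  on `d`, the ring `R/(x₁)` is a domain of dimension `d - 1`. Choose a prime `p` with
  `dim R/p ≥ d`. Then `x₁ ∉ p`, as otherwise `d - 1` elements would generate the maximal ideal of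
  `R/p`. Moreover `p ⊆ (x₁)`, as otherwise `R/(p + (x₁))`, of dimension at least `d - 1`, would be a
  quotient of the domain `R/(x₁)` by a nonzero ideal. Hence `p = x₁ p`, and `p = 0` by Nakayama.
* `isWeaklyRegular_map_pow`: powers of a regular sequence form a regular sequence. Taking a power
  of the last member is harmless, and regular sequences in a local ring may be permuted.
* `monomial_notMem`: in the relation `∏ xᵢ^t ∈ (xᵢ^{t+1})` the factors `xᵢ^t` can be cancelled one at
  a time, turning `xᵢ^{t+1}` into `xᵢ`; this ends with the absurd `1 ∈ (x₁,…,x_d)`.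
-/

open IsLocalRing RingTheory.Sequence
open scoped Pointwise

universe u

/-- Krull's height theorem for the maximal ideal of a local ring, with generators in a list. -/
lemma ringKrullDim_le_length {R : Type u} [CommRing R] [IsNoetherianRing R] [IsLocalRing R]
    (l : List R) (hl : maximalIdeal R = Ideal.ofList l) : ringKrullDim R ≤ l.length := by
  classical
  refine (ringKrullDim_le_spanFinrank_maximalIdeal R).trans ?_
  have hset : {r | r ∈ l} = (l.toFinset : Set R) := by ext; simp
  rw [hl, Ideal.ofList, hset]
  have h := Submodule.spanFinrank_span_le_ncard_of_finite (R := R) l.toFinset.finite_toSet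
  rw [Set.ncard_coe_finset] at h
  exact_mod_cast h.trans l.toFinset_card_le

lemma maximalIdeal_eq_ofList_map {R S : Type u} [CommRing R] [IsLocalRing R] [CommRing S]
    [IsLocalRing S] (f : R →+* S) (hf : Function.Surjective f) {a : R} (ha : f a = 0)
    {l : List R} (hl : maximalIdeal R = Ideal.ofList (a :: l)) :
    maximalIdeal S = Ideal.ofList (l.map f) := by
  rw [← map_maximalIdeal_of_surjective f hf, hl, Ideal.map_ofList, List.map_cons, ha,
    Ideal.ofList_cons]
  simp

lemma exists_prime_le_ringKrullDim_quotient {R : Type u} [CommRing R] {n : ℕ}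
    (h : (n : WithBot ℕ∞) ≤ ringKrullDim R) :
    ∃ p : Ideal R, p.IsPrime ∧ (n : WithBot ℕ∞) ≤ ringKrullDim (R ⧸ p) := by
  obtain ⟨s, rfl⟩ := Order.le_krullDim_iff.mp h
  refine ⟨s.head.asIdeal, s.head.isPrime, ?_⟩
  rw [ringKrullDim_quotient]
  exact Order.le_krullDim_iff.mpr ⟨LTSeries.mk s.length
    (fun i => ⟨s i, s.head_le i⟩) (fun i j hij => s.strictMono hij), rfl⟩

/-- A local ring of dimension at least `n` whose maximal ideal is generated by `n` elements is a
domain, and these generators form a regular sequence in the given order. -/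
theorem isDomain_and_isWeaklyRegular (n : ℕ) : ∀ (R : Type u) [CommRing R] [IsNoetherianRing R]
    [IsLocalRing R] (_ : (n : WithBot ℕ∞) ≤ ringKrullDim R) (l : List R) (_ : l.length = n)
    (_ : maximalIdeal R = Ideal.ofList l), IsDomain R ∧ IsWeaklyRegular R l := by
  induction n with
  | zero =>
    intro R _ _ _ _ l hn hl
    obtain rfl := List.length_eq_zero_iff.mp hn
    rw [Ideal.ofList_nil] at hl
    exact ⟨(isField_iff_maximalIdeal_eq.mpr hl).isDomain, .nil R R⟩
  | succ n ih =>
    intro R _ _ _ hdim l hn hl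
    obtain _ | ⟨a, l⟩ := l
    · simp at hn
    have hn : l.length = n := by simpa using hn
    have ham : a ∈ maximalIdeal R := hl ▸ Ideal.subset_span (by simp)
    have : Nontrivial (R ⧸ Ideal.span {a}) := Ideal.Quotient.nontrivial_iff.mpr fun h =>
      (maximalIdeal.isMaximal R).ne_top (top_le_iff.mp (h ▸
        (Ideal.span_singleton_le_iff_mem _).mpr ham))
    have : IsLocalRing (R ⧸ Ideal.span {a}) :=
      .of_surjective' (Ideal.Quotient.mk _) Ideal.Quotient.mk_surjective
    have hmax : maximalIdeal (R ⧸ Ideal.span {a}) = Ideal.ofList (l.map (Ideal.Quotient.mk _)) :=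
      maximalIdeal_eq_ofList_map _ Ideal.Quotient.mk_surjective
        (Ideal.Quotient.eq_zero_iff_mem.mpr (Ideal.mem_span_singleton_self a)) hl
    -- Dividing by one element of the maximal ideal lowers the dimension by at most one.
    have key : ∀ {S : Type u} [CommRing S] [IsNoetherianRing S] [IsLocalRing S] (b : S),
        b ∈ maximalIdeal S → ((n + 1 : ℕ) : WithBot ℕ∞) ≤ ringKrullDim S →
        (n : WithBot ℕ∞) ≤ ringKrullDim (S ⧸ Ideal.span {b}) := by
      intro S _ _ _ b hb hS
      have h := ringKrullDim_le_ringKrullDim_quotient_add_card {b}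
        (by simpa [ringJacobson_eq_maximalIdeal] using hb)
      have h2 := hS.trans h
      rw [Finset.coe_singleton, Finset.card_singleton, Nat.cast_add, Nat.cast_one] at h2
      exact (ENat.WithBot.add_le_add_one_right_iff).mp h2
    obtain ⟨hdom, hreg⟩ := ih _ (key a ham hdim) (l.map (Ideal.Quotient.mk _)) (by simpa) hmax
    obtain ⟨p, hp, hpdim⟩ := exists_prime_le_ringKrullDim_quotient hdim
    have : IsLocalRing (R ⧸ p) :=
      .of_surjective' (Ideal.Quotient.mk _) Ideal.Quotient.mk_surjective
    have hap : a ∉ p := fun hap => by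
      have h := hpdim.trans (ringKrullDim_le_length _ (maximalIdeal_eq_ofList_map
        (Ideal.Quotient.mk p) Ideal.Quotient.mk_surjective
        (Ideal.Quotient.eq_zero_iff_mem.mpr hap) hl))
      rw [List.length_map, hn] at h
      have : n + 1 ≤ n := by exact_mod_cast h
      omega
    -- `g` is the projection onto `R/(p + (a))`, written as the quotient of `R/p` by the image of `a`.
    -- It factors through the domain `R/(a)`, where it kills the nonzero class of `y`.
    have hpa : p ≤ Ideal.span {a} := fun y hy => by
      by_contra hya
      have ham' : Ideal.Quotient.mk p a ∈ maximalIdeal (R ⧸ p) := by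
        rw [← map_maximalIdeal_of_surjective _ (Ideal.Quotient.mk_surjective (I := p))]
        exact Ideal.mem_map_of_mem _ ham
      let g := (Ideal.Quotient.mk (Ideal.span {Ideal.Quotient.mk p a})).comp (Ideal.Quotient.mk p)
      have hg : Function.Surjective g :=
        Ideal.Quotient.mk_surjective.comp Ideal.Quotient.mk_surjective
      have hga : ∀ r ∈ Ideal.span {a}, g r = 0 := by
        refine fun r hr => (Ideal.span_singleton_le_iff_mem (RingHom.ker g)).mpr ?_ hr
        exact Ideal.Quotient.eq_zero_iff_mem.mpr (Ideal.mem_span_singleton_self _)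
      have h1 := ringKrullDim_succ_le_of_surjective (Ideal.Quotient.lift _ g hga)
        (Ideal.Quotient.lift_surjective_of_surjective _ _ hg)
        (r := Ideal.Quotient.mk _ y)
        (mem_nonZeroDivisors_of_ne_zero fun h => hya (Ideal.Quotient.eq_zero_iff_mem.mp h))
        (by simp [g, Ideal.Quotient.eq_zero_iff_mem.mpr hy])
      have h2 := ringKrullDim_le_length _ hmax
      rw [List.length_map, hn] at h2
      have h3 := (add_le_add_left (key _ ham' hpdim) 1).trans (h1.trans h2)
      have : n + 1 ≤ n := by exact_mod_cast h3
      omega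
    have hp0 : p = ⊥ := by
      refine Submodule.eq_bot_of_le_smul_of_le_jacobson_bot (Ideal.span {a}) p
        (IsNoetherian.noetherian p) (fun y hy => ?_) ?_
      · obtain ⟨b, rfl⟩ := Ideal.mem_span_singleton.mp (hpa hy)
        exact Submodule.smul_mem_smul (Ideal.mem_span_singleton_self a)
          ((hp.mem_or_mem hy).resolve_left hap)
      · rw [jacobson_eq_maximalIdeal _ bot_ne_top]
        exact (Ideal.span_singleton_le_iff_mem _).mpr ham
    subst hp0
    have hdomR : IsDomain R := IsDomain.of_bot_isPrime R
    refine ⟨hdomR, .cons' (IsSMulRegular.of_ne_zero (by simpa using hap)) ?_⟩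
    have h : Ideal.span {a} = a • (⊤ : Ideal R) := by
      simp [← Submodule.ideal_span_singleton_smul]
    have hreg' : IsWeaklyRegular (R ⧸ Ideal.span {a}) l :=
      (isWeaklyRegular_map_algebraMap_iff (R ⧸ Ideal.span {a}) _ l).mp hreg
    exact (isWeaklyRegular_map_algebraMap_iff (R ⧸ Ideal.span {a}) _ l).mpr
      (((Submodule.quotEquivOfEq _ _ h).isWeaklyRegular_congr l).mp hreg')

lemma mem_ofList_of_mul_mem {R : Type u} [CommRing R] {k : List R} {a : R}
    (h : IsWeaklyRegular R (k ++ [a])) {y : R} (hy : a * y ∈ Ideal.ofList k) :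
    y ∈ Ideal.ofList k := by
  rw [isWeaklyRegular_append_iff, isWeaklyRegular_singleton_iff,
    isSMulRegular_quotient_iff_mem_of_smul_mem] at h
  simpa using h.2 y (by simpa using hy)

lemma isWeaklyRegular_concat_pow_iff {R : Type u} [CommRing R] {k : List R} {a : R} {n : ℕ} (hn : 0 < n) :
    IsWeaklyRegular R (k ++ [a ^ n]) ↔ IsWeaklyRegular R (k ++ [a]) := by
  simp only [isWeaklyRegular_append_iff, isWeaklyRegular_singleton_iff, IsSMulRegular.pow_iff hn]

/-- Raising the members of `l` to the `n`-th power keeps `l ++ k` weakly regular. The element treated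
at each step is first moved to the last place, where only regularity on a quotient matters. -/
lemma isWeaklyRegular_map_pow {R : Type u} [CommRing R] [IsNoetherianRing R] [IsLocalRing R]
    {n : ℕ} (hn : 0 < n) (l : List R) : ∀ k : List R, (∀ r ∈ l ++ k, r ∈ maximalIdeal R) →
    IsWeaklyRegular R (l ++ k) → IsWeaklyRegular R (l.map (· ^ n) ++ k) := by
  induction l with
  | nil => exact fun k _ h => h
  | cons a l ih =>
    intro k hk h
    have h1 : IsWeaklyRegular R ((l ++ k) ++ [a ^ n]) := (isWeaklyRegular_concat_pow_iff hn).mpr <|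
      isWeaklyRegular_of_perm_of_subset_maximalIdeal h (List.perm_append_singleton _ _).symm hk
    have hk' : ∀ r ∈ l ++ a ^ n :: k, r ∈ maximalIdeal R := by
      intro r hr
      rcases List.mem_append.mp hr with hr | hr
      · exact hk r (by simp [hr])
      · rcases List.mem_cons.mp hr with rfl | hr
        · exact Ideal.pow_mem_of_mem _ (hk a (by simp)) _ hn
        · exact hk r (by simp [hr])
    have hp : (l ++ k ++ [a ^ n]).Perm (l ++ a ^ n :: k) := by
      rw [List.append_assoc]
      exact (List.perm_append_singleton _ _).append_left _
    have h2 := ih (a ^ n :: k) hk' (isWeaklyRegular_of_perm_of_subset_maximalIdeal h1 hp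
      fun r hr => hk' r (hp.mem_iff.mp hr))
    refine isWeaklyRegular_of_perm_of_subset_maximalIdeal h2 List.perm_middle fun r hr => ?_
    rcases List.mem_append.mp hr with hr | hr
    · obtain ⟨b, hb, rfl⟩ := List.mem_map.mp hr
      exact Ideal.pow_mem_of_mem _ (hk b (by simp [hb])) _ hn
    · exact hk' r (List.mem_append_right _ hr)

/-- The monomial property for the mixed sequence consisting of the `(t+1)`-st powers of the members of
`l` and of the members of `k`; the induction moves elements from `l` to `k`, one at a time. -/
lemma monomial_notMem {R : Type u} [CommRing R] [IsNoetherianRing R] [IsLocalRing R] (t : ℕ)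
    (l : List R) : ∀ k : List R, (∀ r ∈ l ++ k, r ∈ maximalIdeal R) →
    IsWeaklyRegular R (l.map (· ^ (t + 1)) ++ k) →
    (l.map (· ^ t)).prod ∉ Ideal.ofList (l.map (· ^ (t + 1)) ++ k) := by
  induction l with
  | nil =>
    intro k hk _ h
    refine (maximalIdeal.isMaximal R).ne_top ((Ideal.eq_top_iff_one _).mpr ?_)
    exact (Ideal.span_le.mpr (by simpa using! hk)) (by simpa using! h)
  | cons a l ih =>
    intro k hk hreg h
    have hmem : ∀ r ∈ (a :: l).map (· ^ (t + 1)) ++ k, r ∈ maximalIdeal R := by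
      intro r hr
      rcases List.mem_append.mp hr with hr | hr
      · obtain ⟨b, hb, rfl⟩ := List.mem_map.mp hr
        exact Ideal.pow_mem_of_mem _ (hk b (List.mem_append_left _ hb)) _ t.succ_pos
      · exact hk r (List.mem_append_right _ hr)
    have hreg1 : IsWeaklyRegular R ((l.map (· ^ (t + 1)) ++ k) ++ [a ^ (t + 1)]) :=
      isWeaklyRegular_of_perm_of_subset_maximalIdeal hreg
        (List.perm_append_singleton _ _).symm hmem
    have hreg2 := (isWeaklyRegular_concat_pow_iff t.succ_pos).mp hreg1
    refine ih (a :: k) (fun r hr => hk r (by simp at hr ⊢; tauto)) ?_ ?_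
    · refine isWeaklyRegular_of_perm_of_subset_maximalIdeal hreg2 ?_ ?_
      · rw [List.append_assoc]
        exact (List.perm_append_singleton _ _).append_left _
      · intro r hr
        rcases List.mem_append.mp hr with hr | hr
        · exact hmem r (by simp only [List.map_cons, List.cons_append]; exact List.mem_cons_of_mem _ hr)
        · exact hk r (by simp at hr ⊢; tauto)
    · have hsplit : Ideal.ofList (l.map (· ^ (t + 1)) ++ a :: k) =
          Ideal.span {a} ⊔ Ideal.ofList (l.map (· ^ (t + 1)) ++ k) := by
        simp only [Ideal.ofList_append, Ideal.ofList_cons]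
        ac_rfl
      simp only [List.map_cons, List.prod_cons, List.cons_append, Ideal.ofList_cons] at h
      rw [Ideal.mem_span_singleton_sup] at h
      -- From `a^t P = c a^{t+1} + z`, cancel `a^t` in `a^t (P - c a) = z`, modulo the other generators.
      obtain ⟨c, z, hz, hcz⟩ := h
      rw [hsplit, Ideal.mem_span_singleton_sup]
      refine ⟨c, (l.map (· ^ t)).prod - c * a, ?_, by ring⟩
      have hz' : a ^ t * ((l.map (· ^ t)).prod - c * a) ∈ Ideal.ofList (l.map (· ^ (t + 1)) ++ k) := by
        convert hz using 1
        linear_combination -hcz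
      rcases Nat.eq_zero_or_pos t with rfl | ht
      · simpa using hz'
      · exact mem_ofList_of_mul_mem ((isWeaklyRegular_concat_pow_iff ht).mpr hreg2) hz'


/-- Let `(R, 𝔪)` be Noetherian local of dimension `d > 0` and
`x₁, …, x_d` a system of parameters.  If for all `t ≥ 1` we have
`𝔪 · ((x₁^{t+1},…,x_d^{t+1}) : x₁^t⋯x_d^t) ⊆ (x₁,…,x_d)`, then the Monomial Conjecture
holds for this system of parameters: `x₁^t⋯x_d^t ∉ (x₁^{t+1},…,x_d^{t+1})` for all
`t ≥ 1`. -/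
theorem stmt_11 (R : Type*) [CommRing R] [IsNoetherianRing R] [IsLocalRing R]
    (d : ℕ) (hd : 0 < d) (hdim : ringKrullDim R = d) (x : Fin d → R)
    (hx : (Ideal.span (Set.range x)).radical = IsLocalRing.maximalIdeal R)
    (H : ∀ t : ℕ, 1 ≤ t →
      IsLocalRing.maximalIdeal R *
          ((Ideal.span (Set.range fun i => x i ^ (t + 1))).colon
            (Ideal.span {∏ i, x i ^ t})) ≤
        Ideal.span (Set.range x)) :
    ∀ t : ℕ, 1 ≤ t →
      (∏ i, x i ^ t) ∉ Ideal.span (Set.range fun i => x i ^ (t + 1)) := by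
  intro t ht hmem
  have hofFn : ∀ y : Fin d → R, Ideal.ofList (List.ofFn y) = Ideal.span (Set.range y) := by
    intro y
    exact congrArg Ideal.span (Set.ext fun r => List.mem_ofFn)
  have hcolon : (Ideal.span (Set.range fun i => x i ^ (t + 1))).colon
      (Ideal.span {∏ i, x i ^ t}) = ⊤ := by
    rw [Ideal.eq_top_iff_one, Submodule.mem_colon]
    intro s hs
    rw [one_smul]
    exact (Ideal.span_singleton_le_iff_mem _).mpr hmem hs
  have hmax : maximalIdeal R = Ideal.ofList (List.ofFn x) := by
    rw [hofFn]
    refine le_antisymm ?_ (hx ▸ Ideal.le_radical)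
    have h := H t ht
    rwa [hcolon, Ideal.mul_top] at h
  have hreg := (isDomain_and_isWeaklyRegular d R hdim.ge (List.ofFn x) (by simp) hmax).2
  have hm : ∀ r ∈ List.ofFn x, r ∈ maximalIdeal R := fun r hr => hmax ▸ Ideal.subset_span hr
  have hreg' := isWeaklyRegular_map_pow t.succ_pos (List.ofFn x) [] (by simpa using! hm)
    (by simpa using hreg)
  refine monomial_notMem t (List.ofFn x) [] (by simpa using! hm) hreg' ?_
  rw [List.append_nil, List.map_ofFn, List.map_ofFn, List.prod_ofFn, hofFn]
  exact hmem
end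

section
/- Let (R, 𝔪) be a complete local Noetherian domain of dimension d with canonical module ω_R, and let (S, 𝔫) = (R ⊕ ω_R, 𝔪 ⊕ ω_R) be the local ring with multiplication (r,x)(r',x') = (rr'+xx'a, rx'+r'x) for a ∈ 𝔪 without square root in Frac(R). Then Hom_R(H^d_𝔫(S), E(R/𝔪)) ≅ S as S-modules, where E(R/𝔪) is the injective hull of the residue field; consequently the socle of H^d_𝔫(S) is one-dimensional and S is quasi-Gorenstein. -/
/-!
Write `T = H^d_𝔪(R)` and `H = H^d_𝔫(S)`. The theorem rests on `H ≅ S ⊗_R T` and on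
`Hom_R(S, ω) ≅ S`; together with `Hom_R(T, E) ≅ ω` they give
`Hom_R(H, E) ≅ Hom_R(S, Hom_R(T, E)) ≅ Hom_R(S, ω) ≅ S`.

The base change `H ≅ S ⊗_R T` comes from Čech cohomology. Here `d ≠ 0`, since otherwise `R` is a
field and `a = 0` is a square. Local cohomology is a colimit of modules `Ext^n(A / J ^ t, M)`, and in
positive degrees it is the cohomology of the `J`-power-torsion subcomplex of an injective resolution
of `M` (`localCohomology_equiv_coh`). Over a Noetherian ring the torsion part `Γ` of an injective
module surjects onto its localization `Γ_x` (`exists_torsion_divisor`, by the Artin–Rees lemma),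
which gives a long exact sequence when `x` is added to the sequence defining the torsion (`coh_cons`).
By induction, the top local cohomology along `x₁, …, x_d` is the iterated quotient `N ↦ N_x / N`
applied to `M` (`localCohomology_equiv_iterQuot`), and this operation visibly commutes with base
change. A system of parameters of `R` serves for `S` as well because `𝔫² ⊆ 𝔪 S`.

The isomorphism `Hom_R(S, ω) ≅ S` (`TwistedCoords.existsUnique_functional`) sends `σ` to
`s ↦ im (σ s)`, where `im` is the projection of `S = R ⊕ ω` onto `ω`. On the summand `ω` a functional
is an endomorphism of an ideal, hence multiplication by an element of `R`, as `R` is normal.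

Consequently `Hom_R(H, E)` is free over `S` on one generator `φ` (`GeneratesDual`). Matlis-type
arguments show that, conversely, each `R`-functional on `S` is `s ↦ φ (s h)` for some `h ∈ H`
(`GeneratesDual.exists_eq`). So `S`-linear maps into `H` are determined by, and on ideals of `S` can
be extended like, functionals into `E`: the functional through the residue field produces a generator
of the socle, and Baer's criterion holds for `H`. As every element of `H` is `𝔫`-power torsion, `H`
is an injective essential extension of its simple socle, that is, an injective hull of `S / 𝔫`.
-/

set_option maxHeartbeats 1000000

open Polynomial IsLocalRing

attribute [local instance] RestrictScalars.moduleOrig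

/-- `E` is an injective hull of the module `M` over `R`: `E` is injective and contains a
copy of `M` as an essential submodule. -/
def IsInjHull (R M E : Type*) [CommRing R] [AddCommGroup M] [Module R M]
    [AddCommGroup E] [Module R E] : Prop :=
  Module.Injective R E ∧
    ∃ ι : M →ₗ[R] E, Function.Injective ι ∧
      ∀ N : Submodule R E, N ⊓ LinearMap.range ι = ⊥ → N = ⊥

/-! ### Quotients `N_x / N` and torsion subcomplexes -/

/-- A linear relation between `X` and `Y` which is total, surjective, single-valued and injective is
the graph of an isomorphism. -/
theorem exists_linearEquiv_of_graph {A X Y : Type*} [CommRing A] [AddCommGroup X] [Module A X]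
    [AddCommGroup Y] [Module A Y] (G : Submodule A (X × Y))
    (hX : ∀ x, ∃ y, (x, y) ∈ G) (hY : ∀ y, ∃ x, (x, y) ∈ G)
    (h₁ : ∀ y, ((0 : X), y) ∈ G → y = 0) (h₂ : ∀ x, (x, (0 : Y)) ∈ G → x = 0) :
    Nonempty (X ≃ₗ[A] Y) := by
  let p : G →ₗ[A] X := (LinearMap.fst A X Y).comp G.subtype
  let q : G →ₗ[A] Y := (LinearMap.snd A X Y).comp G.subtype
  have hp : Function.Bijective p := by
    refine ⟨?_, fun x => ?_⟩
    · rw [← LinearMap.ker_eq_bot, LinearMap.ker_eq_bot']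
      rintro ⟨⟨x, y⟩, h⟩ (rfl : x = 0)
      obtain rfl := h₁ y h
      rfl
    · obtain ⟨y, h⟩ := hX x
      exact ⟨⟨_, h⟩, rfl⟩
  have hq : Function.Bijective q := by
    refine ⟨?_, fun y => ?_⟩
    · rw [← LinearMap.ker_eq_bot, LinearMap.ker_eq_bot']
      rintro ⟨⟨x, y⟩, h⟩ (rfl : y = 0)
      obtain rfl := h₂ x h
      rfl
    · obtain ⟨x, h⟩ := hY y
      exact ⟨⟨_, h⟩, rfl⟩
  exact ⟨(LinearEquiv.ofBijective p hp).symm.trans (LinearEquiv.ofBijective q hq)⟩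

/-- The cokernel `N_x / N` of the localization map `N → N_x`. -/
noncomputable abbrev LocQuot {A : Type*} [CommRing A] (x : A) (N : Type*) [AddCommGroup N] [Module A N] :=
  LocalizedModule (Submonoid.powers x) N ⧸
    LinearMap.range (LocalizedModule.mkLinearMap (Submonoid.powers x) N)

namespace LocQuot

variable {A : Type*} [CommRing A] (x : A) {N : Type*} [AddCommGroup N] [Module A N]

/-- The class of the fraction `n / x ^ k` in `N_x / N`. -/
noncomputable def frac (n : N) (k : ℕ) : LocQuot x N :=
  Submodule.Quotient.mk (LocalizedModule.mk n ⟨x ^ k, k, rfl⟩)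

theorem frac_surj (t : LocQuot x N) : ∃ n k, t = frac x n k := by
  obtain ⟨t, rfl⟩ := Submodule.Quotient.mk_surjective _ t
  induction t using LocalizedModule.induction_on with
  | h n s =>
    obtain ⟨_, k, rfl⟩ := s
    exact ⟨n, k, rfl⟩

theorem frac_shift (n : N) (k j : ℕ) : frac x (x ^ j • n) (k + j) = frac x n k := by
  unfold frac
  congr 1
  rw [LocalizedModule.mk_eq]
  refine ⟨1, ?_⟩
  simp only [one_smul, Submonoid.smul_def, smul_smul, pow_add]

theorem frac_add (n n' : N) (k : ℕ) : frac x (n + n') k = frac x n k + frac x n' k := by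
  unfold frac
  rw [← Submodule.Quotient.mk_add]
  congr 1
  rw [LocalizedModule.mk_add_mk, LocalizedModule.mk_eq]
  refine ⟨1, ?_⟩
  simp only [one_smul, Submonoid.smul_def, smul_smul, smul_add, Submonoid.coe_mul]

theorem frac_smul (a : A) (n : N) (k : ℕ) : frac x (a • n) k = a • frac x n k := by
  unfold frac
  rw [← Submodule.Quotient.mk_smul, LocalizedModule.smul'_mk]

theorem frac_eq_zero (n : N) (k : ℕ) :
    frac x n k = 0 ↔ ∃ (m : N) (j : ℕ), x ^ j • n = x ^ (j + k) • m := by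
  unfold frac
  rw [Submodule.Quotient.mk_eq_zero, LinearMap.mem_range]
  refine exists_congr fun m => ?_
  rw [LocalizedModule.mkLinearMap_apply, LocalizedModule.mk_eq]
  constructor
  · rintro ⟨⟨_, j, rfl⟩, h⟩
    refine ⟨j, ?_⟩
    simp only [one_smul, Submonoid.smul_def] at h
    rw [pow_add, mul_smul]
    exact h.symm
  · rintro ⟨j, h⟩
    refine ⟨⟨_, j, rfl⟩, ?_⟩
    simp only [one_smul, Submonoid.smul_def]
    rw [h, pow_add, mul_smul]

end LocQuot

section Complex

variable {A : Type} [CommRing A] (I : ℕ → Type) [∀ n, AddCommGroup (I n)] [∀ n, Module A (I n)]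
  (d : ∀ n, I n →ₗ[A] I (n + 1))

/-- The submodule of elements killed by a power of each member of the list `l`. -/
def torsList {A : Type*} [CommRing A] (l : List A) (N : Type*) [AddCommGroup N] [Module A N] :
    Submodule A N where
  carrier := {n | ∀ x ∈ l, ∃ k : ℕ, x ^ k • n = 0}
  zero_mem' := fun _ _ => ⟨0, smul_zero _⟩
  add_mem' := by
    intro a b ha hb x hx
    obtain ⟨k, hk⟩ := ha x hx
    obtain ⟨j, hj⟩ := hb x hx
    refine ⟨k + j, ?_⟩
    rw [smul_add, pow_add, mul_smul, mul_smul, hj, smul_zero, smul_comm, hk, smul_zero, add_zero]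
  smul_mem' := by
    intro c a ha x hx
    obtain ⟨k, hk⟩ := ha x hx
    exact ⟨k, by rw [smul_comm, hk, smul_zero]⟩

theorem torsList_map {A : Type*} [CommRing A] {l : List A} {N N' : Type*} [AddCommGroup N]
    [Module A N] [AddCommGroup N'] [Module A N'] (f : N →ₗ[A] N') {n : N}
    (hn : n ∈ torsList l N) : f n ∈ torsList l N' := fun x hx => by
  obtain ⟨k, hk⟩ := hn x hx
  exact ⟨k, by rw [← map_smul, hk, map_zero]⟩

theorem mem_torsList_cons {A : Type*} [CommRing A] {x : A} {l : List A} {N : Type*}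
    [AddCommGroup N] [Module A N] {n : N} :
    n ∈ torsList (x :: l) N ↔ (∃ k : ℕ, x ^ k • n = 0) ∧ n ∈ torsList l N :=
  List.forall_mem_cons

/-- The `n`-cocycles of the `l`-torsion subcomplex of `(I, d)`. -/
def cyc (l : List A) (n : ℕ) : Submodule A (I n) := torsList l (I n) ⊓ LinearMap.ker (d n)

/-- The `n`-coboundaries of the `l`-torsion subcomplex of `(I, d)`. -/
def bdry (l : List A) : ∀ n, Submodule A (I n)
  | 0 => ⊥
  | n + 1 => (torsList l (I n)).map (d n)

/-- The `n`-th cohomology of the `l`-torsion subcomplex of `(I, d)`. -/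
abbrev Coh (l : List A) (n : ℕ) := cyc I d l n ⧸ (bdry I d l n).submoduleOf (cyc I d l n)

/-- The localization map at `x` is surjective on the `l`-torsion of each `I n`: in the localization,
`q / x ^ k` is the image of `q'`. -/
def LocSurj (l : List A) (x : A) : Prop :=
  ∀ n, ∀ q ∈ torsList l (I n), ∀ k : ℕ, ∃ q' ∈ torsList l (I n), ∃ j : ℕ,
    x ^ (j + k) • q' = x ^ j • q

variable {I d}

theorem bdry_divisible {l : List A} {x : A} (hs : LocSurj I l x) (n : ℕ) {p : I n}
    (hp : p ∈ bdry I d l n) (k : ℕ) : ∃ p' ∈ bdry I d l n, ∃ j : ℕ,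
      x ^ (j + k) • p' = x ^ j • p := by
  cases n with
  | zero =>
    obtain rfl : p = 0 := hp
    exact ⟨0, Submodule.zero_mem _, 0, by simp⟩
  | succ n =>
    obtain ⟨q, hq, rfl⟩ := hp
    obtain ⟨q', hq', j, h⟩ := hs n q hq k
    exact ⟨d n q', ⟨q', hq', rfl⟩, j, by rw [← map_smul, h, map_smul]⟩

theorem coh_mk_eq_zero {l : List A} {n : ℕ} (z : cyc I d l n) :
    (Submodule.Quotient.mk z : Coh I d l n) = 0 ↔ (z : I n) ∈ bdry I d l n := by
  rw [Submodule.Quotient.mk_eq_zero]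
  rfl

theorem bdry_cons_le {l : List A} {x : A} (n : ℕ) : bdry I d (x :: l) n ≤ bdry I d l n := by
  cases n with
  | zero => exact le_rfl
  | succ n => exact Submodule.map_mono fun _ h => (mem_torsList_cons.1 h).2

/-- Write `Γ` for the `l`-torsion subcomplex and `Γ'` for its subcomplex of `x`-power torsion. As
`Γ → Γ_x` is surjective with kernel `Γ'`, the long exact sequence with `H^{n+1}(Γ) = 0` identifies
`H^{n+1}(Γ')` with `H^n(Γ)_x / H^n(Γ)`. Explicitly, `z / x ^ k` goes to the class of `d q`, where
`q` in `Γ^n` satisfies `x ^ k q = z`. -/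
theorem coh_cons (hd : ∀ n q, d (n + 1) (d n q) = 0) {l : List A} {x : A}
    (hs : LocSurj I l x) (n : ℕ) (h0 : Subsingleton (Coh I d l (n + 1))) :
    Nonempty (Coh I d (x :: l) (n + 1) ≃ₗ[A] LocQuot x (Coh I d l n)) := by
  have hbd : bdry I d l n ≤ LinearMap.ker (d n) := by
    cases n with
    | zero => exact bot_le
    | succ n =>
      rintro _ ⟨q, -, rfl⟩
      exact hd n q
  have htor : bdry I d l n ≤ torsList l (I n) := by
    cases n with
    | zero => exact bot_le
    | succ n =>
      rintro _ ⟨q, hq, rfl⟩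
      exact torsList_map _ hq
  let P : Coh I d (x :: l) (n + 1) × LocQuot x (Coh I d l n) → Prop := fun ab =>
    ∃ q ∈ torsList l (I n), ∃ (k : ℕ) (z : cyc I d l n) (w : cyc I d (x :: l) (n + 1)),
      (z : I n) = x ^ k • q ∧ (w : I (n + 1)) = d n q ∧ ab.1 = Submodule.Quotient.mk w ∧
      ab.2 = LocQuot.frac x (Submodule.Quotient.mk z) k
  let G : Submodule A (Coh I d (x :: l) (n + 1) × LocQuot x (Coh I d l n)) :=
    { carrier := {ab | P ab}
      zero_mem' := by
        refine ⟨0, Submodule.zero_mem _, 0, 0, 0, by simp, by simp, rfl, ?_⟩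
        symm
        exact (LocQuot.frac_eq_zero _ _ _).2 ⟨0, 0, by simp⟩
      add_mem' := by
        rintro ⟨a, b⟩ ⟨a', b'⟩ ⟨q, hq, k, z, w, hz, hw, rfl, rfl⟩
          ⟨q', hq', k', z', w', hz', hw', rfl, rfl⟩
        refine ⟨q + q', Submodule.add_mem _ hq hq', k + k', x ^ k' • z + x ^ k • z', w + w',
          ?_, ?_, rfl, ?_⟩
        · simp only [Submodule.coe_add, Submodule.coe_smul, hz, hz', smul_smul, smul_add,
            pow_add, mul_comm]
        · simp only [Submodule.coe_add, hw, hw', map_add]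
        · have e := LocQuot.frac_shift x (Submodule.Quotient.mk z : Coh I d l n) k k'
          have e' := LocQuot.frac_shift x (Submodule.Quotient.mk z' : Coh I d l n) k' k
          rw [add_comm] at e'
          change LocQuot.frac x _ k + LocQuot.frac x _ k' = _
          rw [← e, ← e', ← LocQuot.frac_add]
          rfl
      smul_mem' := by
        rintro c ⟨a, b⟩ ⟨q, hq, k, z, w, hz, hw, rfl, rfl⟩
        refine ⟨c • q, Submodule.smul_mem _ _ hq, k, c • z, c • w, ?_, ?_, rfl, ?_⟩
        · rw [Submodule.coe_smul, hz, smul_comm]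
        · rw [Submodule.coe_smul, hw, map_smul]
        · exact (LocQuot.frac_smul x c (Submodule.Quotient.mk z : Coh I d l n) k).symm }
  refine exists_linearEquiv_of_graph G (fun a => ?_) (fun b => ?_) (fun b hb => ?_) fun a ha => ?_
  · obtain ⟨w, rfl⟩ := Submodule.Quotient.mk_surjective _ a
    obtain ⟨w, hw⟩ := w
    obtain ⟨⟨k, hk⟩, hwl⟩ := mem_torsList_cons.1 hw.1
    have h1 := (coh_mk_eq_zero (⟨w, hwl, hw.2⟩ : cyc I d l (n + 1))).1 (Subsingleton.elim _ _)
    obtain ⟨q, hq, e⟩ := h1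
    have e : d n q = w := e
    refine ⟨LocQuot.frac x (Submodule.Quotient.mk ⟨x ^ k • q, Submodule.smul_mem _ _ hq, ?_⟩) k,
      q, hq, k, _, _, rfl, e.symm, rfl, rfl⟩
    change d n _ = 0
    rw [map_smul, e, hk]
  · obtain ⟨c, k, rfl⟩ := LocQuot.frac_surj x b
    obtain ⟨z, rfl⟩ := Submodule.Quotient.mk_surjective _ c
    obtain ⟨q, hq, j, hj⟩ := hs n z z.2.1 k
    have hz : d n z = 0 := z.2.2
    have hk : x ^ (j + k) • d n q = 0 := by rw [← map_smul, hj, map_smul, hz, smul_zero]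
    refine ⟨Submodule.Quotient.mk ⟨d n q, mem_torsList_cons.2 ⟨⟨_, hk⟩, torsList_map _ hq⟩,
      hd n q⟩, q, hq, k + j, x ^ j • z, _, ?_, rfl, rfl, ?_⟩
    · rw [Submodule.coe_smul, ← hj, add_comm]
    · exact (LocQuot.frac_shift x (Submodule.Quotient.mk z : Coh I d l n) k j).symm
  · obtain ⟨q, hq, k, z, w, hz, hw, h1, rfl⟩ := hb
    obtain ⟨q', hq', e⟩ := (coh_mk_eq_zero w).1 h1.symm
    have e : d n q' = w := e
    obtain ⟨⟨j, hj⟩, hq'l⟩ := mem_torsList_cons.1 hq'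
    refine (LocQuot.frac_eq_zero _ _ _).2 ⟨Submodule.Quotient.mk ⟨q - q', Submodule.sub_mem _ hq
      hq'l, by change d n _ = 0; rw [map_sub, e, hw, sub_self]⟩, j, ?_⟩
    rw [← Submodule.Quotient.mk_smul, ← Submodule.Quotient.mk_smul]
    congr 1
    apply Subtype.ext
    simp only [Submodule.coe_smul, hz, smul_smul, smul_sub, ← pow_add]
    rw [add_comm j k, pow_add x k j, mul_smul _ _ q', hj, smul_zero, sub_zero]
  · obtain ⟨q, hq, k, z, w, hz, hw, rfl, h2⟩ := ha
    obtain ⟨c, j, hc⟩ := (LocQuot.frac_eq_zero _ _ _).1 h2.symm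
    obtain ⟨z', rfl⟩ := Submodule.Quotient.mk_surjective _ c
    rw [← Submodule.Quotient.mk_smul, ← Submodule.Quotient.mk_smul, ← sub_eq_zero,
      ← Submodule.Quotient.mk_sub, coh_mk_eq_zero] at hc
    obtain ⟨p, hp, i, hi⟩ := bdry_divisible hs n hc (j + k)
    refine (coh_mk_eq_zero w).2 ⟨q - z' - p, ?_, ?_⟩
    · refine mem_torsList_cons.2 ⟨⟨i + (j + k), ?_⟩,
        Submodule.sub_mem _ (Submodule.sub_mem _ hq z'.2.1) (htor hp)⟩
      rw [smul_sub, hi]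
      simp only [Submodule.coe_sub, Submodule.coe_smul, hz, smul_sub, smul_smul, ← pow_add]
      rw [sub_self]
    · have h1 : d n z' = 0 := z'.2.2
      have h2 : d n p = 0 := hbd hp
      rw [map_sub, map_sub, h1, h2, hw, sub_zero, sub_zero]

end Complex

/-! ### Torsion in injective modules -/

/-- A homomorphism to an injective module factors through any homomorphism with smaller kernel. -/
theorem exists_factor_of_injective {A E M N : Type} [CommRing A] [AddCommGroup E] [Module A E]
    [AddCommGroup M] [Module A M] [AddCommGroup N] [Module A N] (hE : Module.Injective A E)
    (G : M →ₗ[A] N) (f : M →ₗ[A] E) (h : ∀ m, G m = 0 → f m = 0) :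
    ∃ F : N →ₗ[A] E, ∀ m, F (G m) = f m := by
  have hk : LinearMap.ker G ≤ LinearMap.ker f := fun m hm => h m hm
  let f' : (M ⧸ LinearMap.ker G) →ₗ[A] E := (LinearMap.ker G).liftQ f hk
  let G' : (M ⧸ LinearMap.ker G) →ₗ[A] N := (LinearMap.ker G).liftQ G le_rfl
  have hG' : Function.Injective G' := by
    rw [← LinearMap.ker_eq_bot]
    exact Submodule.ker_liftQ_eq_bot _ _ _ le_rfl
  obtain ⟨F, hF⟩ := hE.out G' hG' f'
  exact ⟨F, fun m => hF (Submodule.Quotient.mk m)⟩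

theorem exists_pow_smul_eq_zero {A Q : Type} [CommRing A] [IsNoetherianRing A] [AddCommGroup Q]
    [Module A Q] {l : List A} {q : Q} (hq : q ∈ torsList l Q) :
    ∃ t : ℕ, ∀ b ∈ (Ideal.span {y | y ∈ l}) ^ t, b • q = 0 := by
  have h : Ideal.span {y | y ∈ l} ≤ Ideal.radical (LinearMap.ker (LinearMap.toSpanSingleton A Q q)) := by
    rw [Ideal.span_le]
    intro y hy
    obtain ⟨k, hk⟩ := hq y hy
    exact ⟨k, hk⟩
  obtain ⟨t, ht⟩ := Ideal.exists_pow_le_of_le_radical_of_fg h (IsNoetherian.noetherian _)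
  exact ⟨t, fun b hb => ht hb⟩

/-- If `q` is a torsion element of an injective module over a Noetherian ring, then `q` is
divisible by `x ^ k` up to `x`-power torsion, within the torsion submodule. The Artin–Rees lemma
shows that `a • x ^ (N + k) ↦ a • x ^ N • q` is well defined modulo a high power of the ideal. -/
theorem exists_torsion_divisor {A Q : Type} [CommRing A] [IsNoetherianRing A] [AddCommGroup Q]
    [Module A Q] (hQ : Module.Injective A Q) {l : List A} (x : A) {q : Q}
    (hq : q ∈ torsList l Q) (k : ℕ) :
    ∃ q' ∈ torsList l Q, ∃ j : ℕ, x ^ (j + k) • q' = x ^ j • q := by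
  obtain ⟨t, ht⟩ := exists_pow_smul_eq_zero hq
  set J : Ideal A := Ideal.span {y | y ∈ l} with hJ
  -- `N` is chosen so that the annihilators of the powers of `x` are stable from `x ^ N` on.
  obtain ⟨N, hN⟩ := monotone_stabilizes_iff_noetherian.2 (inferInstance : IsNoetherian A A)
    ⟨fun n => LinearMap.ker (LinearMap.toSpanSingleton A A (x ^ n)), by
      intro n m hnm b hb
      have hb : b * x ^ n = 0 := hb
      change b * x ^ m = 0
      rw [← Nat.add_sub_cancel' hnm, pow_add, ← mul_assoc, hb, zero_mul]⟩
  have hN' : ∀ b : A, b * x ^ (N + k) = 0 → b * x ^ N = 0 := fun b hb =>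
    (SetLike.ext_iff.1 (hN (N + k) (Nat.le_add_right _ _)) b).2 hb
  obtain ⟨c, hc⟩ := Ideal.exists_pow_inf_eq_pow_smul J (Ideal.span {x ^ (N + k)})
  obtain ⟨F, hF⟩ := exists_factor_of_injective hQ
    ((Ideal.Quotient.mkₐ A (J ^ (c + t))).toLinearMap ∘ₗ
      LinearMap.toSpanSingleton A A (x ^ (N + k)))
    (LinearMap.toSpanSingleton A Q (x ^ N • q)) (by
      intro a ha
      have ha : Ideal.Quotient.mk (J ^ (c + t)) (a * x ^ (N + k)) = 0 := ha
      rw [Ideal.Quotient.eq_zero_iff_mem] at ha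
      have h1 : a * x ^ (N + k) ∈ J ^ (c + t) • (⊤ : Submodule A A) ⊓ Ideal.span {x ^ (N + k)} :=
        ⟨by simpa using ha, Ideal.mul_mem_left _ _ (Ideal.mem_span_singleton_self _)⟩
      rw [hc _ (Nat.le_add_right _ _), Nat.add_sub_cancel_left] at h1
      obtain ⟨b, hb, e⟩ := Submodule.mem_smul_span_singleton.1
        (Submodule.smul_mono le_rfl inf_le_right h1)
      have e : b * x ^ (N + k) = a * x ^ (N + k) := e
      have e2 := hN' (a - b) (by rw [sub_mul, e, sub_self])
      change a • x ^ N • q = 0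
      rw [smul_smul, ← sub_add_cancel a b, add_mul, e2, zero_add, mul_comm, mul_smul, ht b hb,
        smul_zero])
  refine ⟨F (Ideal.Quotient.mk _ 1), fun y hy => ⟨c + t, ?_⟩, N, ?_⟩
  · have h0 : y ^ (c + t) • (Ideal.Quotient.mk (J ^ (c + t)) (1 : A) : A ⧸ J ^ (c + t)) = 0 := by
      change Ideal.Quotient.mk (J ^ (c + t)) (y ^ (c + t) * 1) = 0
      rw [mul_one, Ideal.Quotient.eq_zero_iff_mem]
      exact Ideal.pow_mem_pow (Ideal.subset_span (s := {y | y ∈ l}) hy) _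
    rw [← map_smul, h0, map_zero]
  · have := hF 1
    rw [LinearMap.toSpanSingleton_apply, one_smul] at this
    rw [← this, ← map_smul]
    congr 1
    simp only [LinearMap.comp_apply, LinearMap.toSpanSingleton_apply, one_smul, AlgHom.toLinearMap_apply,
      Ideal.Quotient.mkₐ_eq_mk]
    change Ideal.Quotient.mk (J ^ (c + t)) (_ * 1) = _
    rw [mul_one]

theorem locSurj_of_injective {A : Type} [CommRing A] [IsNoetherianRing A] (I : ℕ → Type)
    [∀ n, AddCommGroup (I n)] [∀ n, Module A (I n)] (hI : ∀ n, Module.Injective A (I n))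
    (l : List A) (x : A) : LocSurj I l x :=
  fun n _ hq k => exists_torsion_divisor (hI n) x hq k

/-! ### Top Čech cohomology as an iterated quotient -/

theorem locQuot_equiv_of_isLocalizedModule {A : Type} [CommRing A] (x : A) {N N' : Type}
    [AddCommGroup N] [Module A N] [AddCommGroup N'] [Module A N'] (g : N →ₗ[A] N')
    [IsLocalizedModule (Submonoid.powers x) g] :
    Nonempty (LocQuot x N ≃ₗ[A] N' ⧸ LinearMap.range g) := by
  refine ⟨Submodule.Quotient.equiv _ _ (IsLocalizedModule.iso (Submonoid.powers x) g) ?_⟩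
  rw [← IsLocalizedModule.iso_symm_comp (Submonoid.powers x) g, LinearMap.range_comp,
    ← Submodule.map_comp]
  exact (congrArg (fun f => Submodule.map f (LinearMap.range g))
    (IsLocalizedModule.iso (Submonoid.powers x) g).comp_symm).trans (Submodule.map_id _)

theorem locQuot_congr {A : Type} [CommRing A] (x : A) {N N' : Type}
    [AddCommGroup N] [Module A N] [AddCommGroup N'] [Module A N'] (e : N ≃ₗ[A] N') :
    Nonempty (LocQuot x N ≃ₗ[A] LocQuot x N') := by
  have := IsLocalizedModule.of_linearEquiv_right (S := Submonoid.powers x)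
    (LocalizedModule.mkLinearMap (Submonoid.powers x) N') e
  obtain ⟨h⟩ := locQuot_equiv_of_isLocalizedModule x
    ((LocalizedModule.mkLinearMap (Submonoid.powers x) N').comp e.toLinearMap)
  refine ⟨h.trans (Submodule.quotEquivOfEq _ _ ?_)⟩
  rw [LinearMap.range_comp, LinearEquiv.range, Submodule.map_top]

theorem locQuot_subsingleton {A : Type} [CommRing A] (x : A) (N : Type)
    [AddCommGroup N] [Module A N] [Subsingleton N] : Subsingleton (LocQuot x N) := by
  refine ⟨fun s t => ?_⟩
  obtain ⟨n, k, rfl⟩ := LocQuot.frac_surj x s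
  obtain ⟨m, j, rfl⟩ := LocQuot.frac_surj x t
  rw [(LocQuot.frac_eq_zero x n k).2 ⟨0, 0, Subsingleton.elim _ _⟩,
    (LocQuot.frac_eq_zero x m j).2 ⟨0, 0, Subsingleton.elim _ _⟩]

/-- The iterated quotient `T_l(M)`, where `T_{x :: l}(M) = T_l(M)_x / T_l(M)`; it is the top
Čech cohomology of `M` along the sequence `l`. -/
noncomputable def iterQuot {A : Type} [CommRing A] (M : ModuleCat.{0} A) :
    List A → ModuleCat.{0} A
  | [] => M
  | x :: l => ModuleCat.of A (LocQuot x (iterQuot M l))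

/-- For an exact complex of injectives resolving `M`, the `l`-torsion subcomplex has no cohomology
beyond the length of `l`, and its cohomology in that degree is `T_l(M)`. -/
theorem coh_iterQuot {A : Type} [CommRing A] [IsNoetherianRing A] (I : ℕ → Type)
    [∀ n, AddCommGroup (I n)] [∀ n, Module A (I n)] (d : ∀ n, I n →ₗ[A] I (n + 1))
    (hd : ∀ n q, d (n + 1) (d n q) = 0) (hI : ∀ n, Module.Injective A (I n))
    (M : ModuleCat.{0} A) (h0 : Nonempty (Coh I d [] 0 ≃ₗ[A] M))
    (hex : ∀ n, Subsingleton (Coh I d [] (n + 1))) (l : List A) :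
    (∀ n, l.length < n → Subsingleton (Coh I d l n)) ∧
      Nonempty (Coh I d l l.length ≃ₗ[A] iterQuot M l) := by
  induction l with
  | nil =>
    refine ⟨fun n hn => ?_, h0⟩
    obtain ⟨n, rfl⟩ := Nat.exists_eq_succ_of_ne_zero hn.ne'
    exact hex n
  | cons x l ih =>
    obtain ⟨ih, ⟨e⟩⟩ := ih
    have hs := locSurj_of_injective I hI l x
    constructor
    · intro n hn
      obtain ⟨n, rfl⟩ := Nat.exists_eq_succ_of_ne_zero (Nat.ne_of_gt (Nat.zero_lt_of_lt hn))
      rw [List.length_cons] at hn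
      obtain ⟨f⟩ := coh_cons hd hs n (ih _ (by omega))
      have := ih n (by omega)
      have := locQuot_subsingleton x (Coh I d l n)
      exact f.injective.subsingleton
    · obtain ⟨f⟩ := coh_cons hd hs l.length (ih _ (by omega))
      obtain ⟨g⟩ := locQuot_congr x e
      exact ⟨f.trans g⟩

open TensorProduct in
/-- The quotient `N_x / N` commutes with base change. -/
theorem locQuot_baseChange {R S : Type} [CommRing R] [CommRing S] [Algebra R S] (x : R)
    (N : Type) [AddCommGroup N] [Module R N] :
    Nonempty (LocQuot (algebraMap R S x) (S ⊗[R] N) ≃ₗ[S] S ⊗[R] LocQuot x N) := by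
  let g := LocalizedModule.mkLinearMap (Submonoid.powers x) N
  have h1 : IsLocalizedModule (Submonoid.powers x) ((g.baseChange S).restrictScalars R) := by
    have h0 : IsLocalizedModule (Submonoid.powers x) (g.rTensor S) :=
      inferInstanceAs (IsLocalizedModule (Submonoid.powers x)
        (AlgebraTensorModule.rTensor R S g))
    have h := IsLocalizedModule.of_linearEquiv_right (S := Submonoid.powers x)
      ((TensorProduct.comm R _ S).toLinearMap.comp (g.rTensor S)) (TensorProduct.comm R S N)
    convert h
    ext
    rfl
  have h2 := IsLocalizedModule.of_restrictScalars (Submonoid.powers x) (g.baseChange S)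
  rw [Algebra.algebraMapSubmonoid_powers] at h2
  obtain ⟨e⟩ := locQuot_equiv_of_isLocalizedModule (algebraMap R S x) (g.baseChange S)
  let p := (LinearMap.range g).mkQ.baseChange S
  have hp : Function.Surjective p := LinearMap.lTensor_surjective S (Submodule.mkQ_surjective _)
  have hk : LinearMap.range (g.baseChange S) = LinearMap.ker p := by
    have h := lTensor_exact S (LinearMap.exact_map_mkQ_range g) (Submodule.mkQ_surjective _)
    ext z
    exact (h z).symm
  exact ⟨e.trans ((Submodule.quotEquivOfEq _ _ hk).trans (p.quotKerEquivOfSurjective hp))⟩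

open TensorProduct in
theorem iterQuot_baseChange {R S : Type} [CommRing R] [CommRing S] [Algebra R S]
    (N : ModuleCat.{0} R) (N' : ModuleCat.{0} S) (e : N' ≃ₗ[S] S ⊗[R] N) (l : List R) :
    Nonempty (iterQuot N' (l.map (algebraMap R S)) ≃ₗ[S] S ⊗[R] iterQuot N l) := by
  induction l with
  | nil => exact ⟨e⟩
  | cons x l ih =>
    obtain ⟨e⟩ := ih
    obtain ⟨f⟩ := locQuot_congr (algebraMap R S x) e
    obtain ⟨g⟩ := locQuot_baseChange (S := S) x (iterQuot N l)
    exact ⟨f.trans g⟩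

/-! ### Cocycle representatives for `Ext` -/

section DerivedExt

open CategoryTheory Opposite Limits HomologicalComplex

variable {A : Type} [CommRing A]

theorem exists_of_exact_op (T : ShortComplex (ModuleCat.{0} A)ᵒᵖ) (hT : T.Exact)
    (y : T.X₂.unop) (hy : T.f.unop y = 0) : ∃ z : T.X₃.unop, T.g.unop z = y :=
  (ShortComplex.moduleCat_exact_iff _).1 hT.unop y hy

/-- In a chain complex of the opposite category, which amounts to a cochain complex of modules,
the homology class `x` is represented by the cocycle `c`. -/
def OpRep (K : ChainComplex (ModuleCat.{0} A)ᵒᵖ ℕ) (n : ℕ) (x : (K.homology n).unop)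
    (c : (K.X n).unop) : Prop :=
  ∃ z : (K.opcycles n).unop, (K.homologyι n).unop z = x ∧ (K.pOpcycles n).unop z = c

namespace OpRep

variable {K L : ChainComplex (ModuleCat.{0} A)ᵒᵖ ℕ} {n : ℕ}

theorem exists_cocycle (x : (K.homology n).unop) : ∃ c, OpRep K n x c := by
  have h : Function.Surjective (K.homologyι n).unop :=
    (ModuleCat.epi_iff_surjective _).1 inferInstance
  obtain ⟨z, hz⟩ := h x
  exact ⟨_, z, hz, rfl⟩

theorem exists_class (c : (K.X n).unop) (hc : (K.d (n + 1) n).unop c = 0) :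
    ∃ x, OpRep K n x c := by
  obtain ⟨z, hz⟩ := exists_of_exact_op
    (ShortComplex.mk (K.d (n + 1) n) (K.pOpcycles n) (K.d_pOpcycles _ _))
    (ShortComplex.exact_of_g_is_cokernel _ (K.opcyclesIsCokernel (n + 1) n (by simp))) c hc
  exact ⟨_, z, rfl, hz⟩

theorem cocycle {x : (K.homology n).unop} {c : (K.X n).unop} (h : OpRep K n x c) :
    (K.d (n + 1) n).unop c = 0 := by
  obtain ⟨z, -, rfl⟩ := h
  have := congrArg Quiver.Hom.unop (K.d_pOpcycles (n + 1) n)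
  exact congrArg (fun f => f.hom z) this

theorem eq_zero_iff {x : (K.homology n).unop} {c : (K.X n).unop} (h : OpRep K n x c)
    {p : ℕ} (hp : p + 1 = n) : x = 0 ↔ ∃ b, (K.d n p).unop b = c := by
  subst hp
  obtain ⟨z, rfl, rfl⟩ := h
  have e := congrArg Quiver.Hom.unop (K.p_fromOpcycles (p + 1) p)
  have e2 := congrArg Quiver.Hom.unop (K.homologyι_comp_fromOpcycles (p + 1) p)
  constructor
  · intro hz
    obtain ⟨b, hb⟩ := exists_of_exact_op
      (ShortComplex.mk (K.homologyι (p + 1)) (K.fromOpcycles (p + 1) p)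
        (K.homologyι_comp_fromOpcycles _ _))
      (ShortComplex.exact_of_f_is_kernel _ (K.homologyIsKernel (p + 1) p (by simp))) z hz
    refine ⟨b, ?_⟩
    rw [← e, ← hb]
    rfl
  · rintro ⟨b, hb⟩
    have hm : Function.Injective (K.pOpcycles (p + 1)).unop :=
      (ModuleCat.mono_iff_injective _).1 inferInstance
    rw [← e] at hb
    obtain rfl := hm hb
    exact congrArg (fun f => f.hom b) e2

theorem add {x x' : (K.homology n).unop} {c c' : (K.X n).unop} (h : OpRep K n x c)
    (h' : OpRep K n x' c') : OpRep K n (x + x') (c + c') := by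
  obtain ⟨z, rfl, rfl⟩ := h
  obtain ⟨z', rfl, rfl⟩ := h'
  exact ⟨z + z', map_add _ _ _, map_add _ _ _⟩

theorem smul (r : A) {x : (K.homology n).unop} {c : (K.X n).unop} (h : OpRep K n x c) :
    OpRep K n (r • x) (r • c) := by
  obtain ⟨z, rfl, rfl⟩ := h
  exact ⟨r • z, map_smul _ _ _, map_smul _ _ _⟩

theorem map (φ : K ⟶ L) {x : (L.homology n).unop} {c : (L.X n).unop} (h : OpRep L n x c) :
    OpRep K n ((homologyMap φ n).unop x) ((φ.f n).unop c) := by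
  obtain ⟨z, rfl, rfl⟩ := h
  refine ⟨(opcyclesMap φ n).unop z, ?_, ?_⟩
  · have e := congrArg Quiver.Hom.unop (homologyι_naturality φ n)
    exact (congrArg (fun f => f.hom z) e).symm
  · have e := congrArg Quiver.Hom.unop (p_opcyclesMap φ n)
    exact congrArg (fun f => f.hom z) e

end OpRep

/-- The complex `Hom(P, Y)`, regarded as a chain complex of the opposite category. -/
noncomputable abbrev opHom {X : ModuleCat.{0} A} (P : ProjectiveResolution X)
    (Y : ModuleCat.{0} A) : ChainComplex (ModuleCat.{0} A)ᵒᵖ ℕ :=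
  (((linearYoneda A (ModuleCat.{0} A)).obj Y).rightOp.mapHomologicalComplex _).obj P.complex

/-- The module `Ext^n(X, Y)` is the cohomology of `Hom(P, Y)`. -/
noncomputable def extEquivOpHom {X : ModuleCat.{0} A} (P : ProjectiveResolution X)
    (Y : ModuleCat.{0} A) (n : ℕ) :
    ((Ext A (ModuleCat.{0} A) n).obj (op X)).obj Y ≃ₗ[A] ((opHom P Y).homology n).unop :=
  ((P.isoLeftDerivedObj ((linearYoneda A (ModuleCat.{0} A)).obj Y).rightOp n).unop.symm :
    ((Ext A (ModuleCat.{0} A) n).obj (op X)).obj Y ≅ ((opHom P Y).homology n).unop).toLinearEquiv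

/-- The cocycle `c : P_n → Y` represents the class `x` in `Ext^n(X, Y)`, where `Ext^n(-, Y)` is
the derived functor computed with the projective resolution `P` of `X`. -/
def ExtRep {X : ModuleCat.{0} A} (P : ProjectiveResolution X) (Y : ModuleCat.{0} A) (n : ℕ)
    (x : ((Ext A (ModuleCat.{0} A) n).obj (op X)).obj Y) (c : P.complex.X n ⟶ Y) : Prop :=
  OpRep (opHom P Y) n (extEquivOpHom P Y n x) c

namespace ExtRep

variable {X X' : ModuleCat.{0} A} {P : ProjectiveResolution X} {P' : ProjectiveResolution X'}
  {Y : ModuleCat.{0} A} {n : ℕ}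

theorem exists_cocycle (P : ProjectiveResolution X)
    (x : ((Ext A (ModuleCat.{0} A) n).obj (op X)).obj Y) : ∃ c, ExtRep P Y n x c :=
  OpRep.exists_cocycle (K := opHom P Y) _

theorem exists_class (c : P.complex.X n ⟶ Y) (hc : P.complex.d (n + 1) n ≫ c = 0) :
    ∃ x, ExtRep P Y n x c := by
  obtain ⟨x, hx⟩ := OpRep.exists_class (K := opHom P Y) (n := n) c hc
  obtain ⟨x, rfl⟩ := (extEquivOpHom P Y n).surjective x
  exact ⟨x, hx⟩

theorem cocycle {x : ((Ext A (ModuleCat.{0} A) n).obj (op X)).obj Y} {c : P.complex.X n ⟶ Y}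
    (h : ExtRep P Y n x c) : P.complex.d (n + 1) n ≫ c = 0 :=
  OpRep.cocycle h

theorem eq_zero_iff {x : ((Ext A (ModuleCat.{0} A) n).obj (op X)).obj Y}
    {c : P.complex.X n ⟶ Y} (h : ExtRep P Y n x c) {p : ℕ} (hp : p + 1 = n) :
    x = 0 ↔ ∃ b : P.complex.X p ⟶ Y, P.complex.d n p ≫ b = c :=
  (LinearEquiv.map_eq_zero_iff (extEquivOpHom P Y n)).symm.trans (OpRep.eq_zero_iff h hp)

theorem add {x x' : ((Ext A (ModuleCat.{0} A) n).obj (op X)).obj Y} {c c' : P.complex.X n ⟶ Y}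
    (h : ExtRep P Y n x c) (h' : ExtRep P Y n x' c') : ExtRep P Y n (x + x') (c + c') := by
  have := OpRep.add h h'
  rwa [← map_add] at this

theorem smul (r : A) {x : ((Ext A (ModuleCat.{0} A) n).obj (op X)).obj Y}
    {c : P.complex.X n ⟶ Y} (h : ExtRep P Y n x c) : ExtRep P Y n (r • x) (r • c) := by
  have := OpRep.smul r h
  rwa [← map_smul] at this

theorem map {g : X' ⟶ X} (φ : ProjectiveResolution.Hom P' P g)
    {x : ((Ext A (ModuleCat.{0} A) n).obj (op X)).obj Y} {c : P.complex.X n ⟶ Y}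
    (h : ExtRep P Y n x c) :
    ExtRep P' Y n (((Ext A (ModuleCat.{0} A) n).map g.op).app Y x) (φ.hom.f n ≫ c) := by
  have h1 := OpRep.map ((((linearYoneda A
    (ModuleCat.{0} A)).obj Y).rightOp.mapHomologicalComplex _).map φ.hom) h
  have e := congrArg Quiver.Hom.unop (ProjectiveResolution.isoLeftDerivedObj_inv_naturality g P' P
    φ.hom φ.hom_f_zero_comp_π_f_zero ((linearYoneda A (ModuleCat.{0} A)).obj Y).rightOp n)
  have e := congrArg (fun f => f.hom x) e
  have e : extEquivOpHom P' Y n (((Ext A (ModuleCat.{0} A) n).map g.op).app Y x) =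
    (homologyMap ((((linearYoneda A (ModuleCat.{0} A)).obj Y).rightOp.mapHomologicalComplex
      _).map φ.hom) n).unop (extEquivOpHom P Y n x) := e
  rw [← e] at h1
  exact h1

end ExtRep

end DerivedExt

section Bridge

open CategoryTheory Opposite Limits

variable {A : Type} [CommRing A]

theorem exists_resolutionHom {X X' : ModuleCat.{0} A} (P' : ProjectiveResolution X')
    (P : ProjectiveResolution X) (g : X' ⟶ X) : Nonempty (ProjectiveResolution.Hom P' P g) :=
  ⟨⟨ProjectiveResolution.lift g P' P, by
    have h := ProjectiveResolution.lift_commutes g P' P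
    exact HomologicalComplex.congr_hom h 0⟩⟩

/-- The cocycle `f : X → I^n` of an injective resolution `I` of `M` represents the same class of
`Ext^n(X, M)` as the class `x` of the derived functor of `Hom(-, M)`; the comparison goes through
Yoneda-type Ext groups, where cocycles of projective and of injective resolutions both live. -/
def InjRep {M : ModuleCat.{0} A} (I : InjectiveResolution M) (X : ModuleCat.{0} A) (n : ℕ)
    (x : ((Ext A (ModuleCat.{0} A) n).obj (op X)).obj M) (f : X ⟶ I.cocomplex.X n) : Prop :=
  ∃ (hf : f ≫ I.cocomplex.d n (n + 1) = 0) (c : (projectiveResolution X).complex.X n ⟶ M)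
    (h : ExtRep (projectiveResolution X) M n x c),
    (projectiveResolution X).extMk c (n + 1) rfl h.cocycle = I.extMk f (n + 1) rfl hf

namespace InjRep

variable {M : ModuleCat.{0} A} {I : InjectiveResolution M} {X X' : ModuleCat.{0} A} {n : ℕ}

theorem exists_cocycle (I : InjectiveResolution M)
    (x : ((Ext A (ModuleCat.{0} A) n).obj (op X)).obj M) : ∃ f, InjRep I X n x f := by
  obtain ⟨c, hc⟩ := ExtRep.exists_cocycle (projectiveResolution X) x
  obtain ⟨f, hf, e⟩ := I.extMk_surjective
    ((projectiveResolution X).extMk c (n + 1) rfl hc.cocycle) (n + 1) rfl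
  exact ⟨f, hf, c, hc, e.symm⟩

theorem exists_class (f : X ⟶ I.cocomplex.X n) (hf : f ≫ I.cocomplex.d n (n + 1) = 0) :
    ∃ x, InjRep I X n x f := by
  obtain ⟨c, hc, e⟩ := (projectiveResolution X).extMk_surjective
    (I.extMk f (n + 1) rfl hf) (n + 1) rfl
  obtain ⟨x, hx⟩ := ExtRep.exists_class c hc
  exact ⟨x, hf, c, hx, e⟩

theorem eq_zero_iff {x : ((Ext A (ModuleCat.{0} A) n).obj (op X)).obj M}
    {f : X ⟶ I.cocomplex.X n} (h : InjRep I X n x f) {p : ℕ} (hp : p + 1 = n) :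
    x = 0 ↔ ∃ b : X ⟶ I.cocomplex.X p, b ≫ I.cocomplex.d p n = f := by
  obtain ⟨hf, c, hc, e⟩ := h
  rw [hc.eq_zero_iff hp, ← ProjectiveResolution.extMk_eq_zero_iff _ c (n + 1) rfl hc.cocycle p hp,
    e, InjectiveResolution.extMk_eq_zero_iff _ f (n + 1) rfl hf p hp]

theorem add {x x' : ((Ext A (ModuleCat.{0} A) n).obj (op X)).obj M}
    {f f' : X ⟶ I.cocomplex.X n} (h : InjRep I X n x f) (h' : InjRep I X n x' f') :
    InjRep I X n (x + x') (f + f') := by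
  obtain ⟨hf, c, hc, e⟩ := h
  obtain ⟨hf', c', hc', e'⟩ := h'
  refine ⟨by rw [Preadditive.add_comp, hf, hf', add_zero], c + c', hc.add hc', ?_⟩
  rw [← ProjectiveResolution.add_extMk _ c c' (n + 1) rfl hc.cocycle hc'.cocycle, e, e',
    InjectiveResolution.add_extMk]

theorem comp {g : X' ⟶ X} {c : (projectiveResolution X).complex.X n ⟶ M}
    (φ : ProjectiveResolution.Hom (projectiveResolution X') (projectiveResolution X) g)
    (hc : (projectiveResolution X).complex.d (n + 1) n ≫ c = 0)
    (hc' : (projectiveResolution X').complex.d (n + 1) n ≫ φ.hom.f n ≫ c = 0)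
    {f : X ⟶ I.cocomplex.X n} (hf : f ≫ I.cocomplex.d n (n + 1) = 0)
    (e : (projectiveResolution X).extMk c (n + 1) rfl hc = I.extMk f (n + 1) rfl hf) :
    (projectiveResolution X').extMk (φ.hom.f n ≫ c) (n + 1) rfl hc' =
      I.extMk (g ≫ f) (n + 1) rfl (by rw [Category.assoc, hf, Limits.comp_zero]) := by
  rw [← ProjectiveResolution.mk₀_comp_extMk c (n + 1) rfl hc φ, e,
    InjectiveResolution.mk₀_comp_extMk]

theorem map (g : X' ⟶ X) {x : ((Ext A (ModuleCat.{0} A) n).obj (op X)).obj M}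
    {f : X ⟶ I.cocomplex.X n} (h : InjRep I X n x f) :
    InjRep I X' n (((Ext A (ModuleCat.{0} A) n).map g.op).app M x) (g ≫ f) := by
  obtain ⟨hf, c, hc, e⟩ := h
  obtain ⟨φ⟩ := exists_resolutionHom (projectiveResolution X') (projectiveResolution X) g
  exact ⟨by rw [Category.assoc, hf, Limits.comp_zero], _, hc.map φ, comp φ _ (hc.map φ).cocycle hf e⟩

theorem smul (r : A) {x : ((Ext A (ModuleCat.{0} A) n).obj (op X)).obj M}
    {f : X ⟶ I.cocomplex.X n} (h : InjRep I X n x f) : InjRep I X n (r • x) (r • f) := by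
  obtain ⟨hf, c, hc, e⟩ := h
  let φ : ProjectiveResolution.Hom (projectiveResolution X) (projectiveResolution X) (r • 𝟙 X) :=
    { hom := r • 𝟙 _
      hom_f_zero_comp_π_f_zero := by
        have h0 : ∀ {Z Y : ModuleCat.{0} A} (p : Z ⟶ Y), (r • 𝟙 Z) ≫ p = p ≫ (r • 𝟙 Y) :=
          fun p => by rw [Linear.smul_comp, Linear.comp_smul, Category.id_comp, Category.comp_id]
        exact h0 _ }
  have h1 : φ.hom.f n ≫ c = r • c := by
    change (r • 𝟙 _) ≫ c = _
    rw [Linear.smul_comp, Category.id_comp]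
  have h2 := comp φ hc.cocycle (by rw [h1]; exact (hc.smul r).cocycle) hf e
  refine ⟨by rw [Linear.smul_comp, hf, smul_zero], r • c, hc.smul r, ?_⟩
  simp only [h1, Linear.smul_comp, Category.id_comp] at h2
  exact h2

end InjRep

end Bridge

/-! ### Local cohomology as torsion cohomology -/

section LocalCohomologyElements

open CategoryTheory Opposite Limits

variable {A : Type} [CommRing A]

/-- The module `A / J ^ t`. -/
abbrev quotPow (J : Ideal A) (t : ℕ) : ModuleCat.{0} A := ModuleCat.of A (A ⧸ J ^ t)

/-- The projection `A / J ^ s → A / J ^ t` for `t ≤ s`. -/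
noncomputable def quotPowMap (J : Ideal A) {t s : ℕ} (h : t ≤ s) : quotPow J s ⟶ quotPow J t :=
  ModuleCat.ofHom (Submodule.mapQ _ _ LinearMap.id (Ideal.pow_le_pow_right h))

theorem quotPowMap_one (J : Ideal A) {t s : ℕ} (h : t ≤ s) :
    (quotPowMap J h).hom (1 : A ⧸ J ^ s) = (1 : A ⧸ J ^ t) := rfl

/-- The stage `Ext^n(A / J ^ t, M)` of the colimit defining local cohomology. -/
noncomputable abbrev extStage (J : Ideal A) (n : ℕ) (M : ModuleCat.{0} A) (t : ℕ) : ModuleCat.{0} A :=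
  ((Ext A (ModuleCat.{0} A) n).obj (op (quotPow J t))).obj M

/-- The transition map `Ext^n(A / J ^ t, M) → Ext^n(A / J ^ s, M)` for `t ≤ s`. -/
noncomputable def extTrans (J : Ideal A) (n : ℕ) (M : ModuleCat.{0} A) {t s : ℕ} (h : t ≤ s) :
    extStage J n M t ⟶ extStage J n M s :=
  ((Ext A (ModuleCat.{0} A) n).map (quotPowMap J h).op).app M

/-- Elementwise description of local cohomology as the filtered colimit of the modules
`Ext^n(A / J ^ t, M)`. -/
theorem exists_lcCocone (J : Ideal A) (n : ℕ) (M : ModuleCat.{0} A) :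
    ∃ i : ∀ t, extStage J n M t ⟶ (localCohomology J n).obj M,
      (∀ x, ∃ t e, (i t).hom e = x) ∧
      (∀ {t s} (h : t ≤ s) e, (i s).hom ((extTrans J n M h).hom e) = (i t).hom e) ∧
      ∀ t e, (i t).hom e = 0 → ∃ s, ∃ h : t ≤ s, (extTrans J n M h).hom e = 0 := by
  let F := localCohomology.diagram (localCohomology.idealPowersDiagram J) n
  have : HasColimit F := localCohomology.hasColimitDiagram.{0, 0} _ _
  let c := ((evaluation (ModuleCat.{0} A) (ModuleCat.{0} A)).obj M).mapCocone (colimit.cocone F)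
  have hc : IsColimit c := isColimitOfPreserves _ (colimit.isColimit F)
  refine ⟨fun t => c.ι.app (op (op t)), ?_, ?_, ?_⟩
  · intro x
    obtain ⟨j, y, h⟩ := Concrete.isColimit_exists_rep _ hc x
    exact ⟨j.unop.unop, y, h⟩
  · intro t s h e
    have := c.w (show op (op t) ⟶ op (op s) from (homOfLE h).op.op)
    exact congrArg (fun f => f.hom e) this
  · intro t e h
    obtain ⟨k, f, g, h⟩ := Concrete.isColimit_exists_of_rep_eq (i := op (op t)) (j := op (op t)) _ hc
      e 0 (h.trans (map_zero (c.ι.app (op (op t))).hom).symm)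
    refine ⟨k.unop.unop, f.unop.unop.le, ?_⟩
    exact h.trans (map_zero _)

end LocalCohomologyElements

section LocalCohomologyTorsion

open CategoryTheory Opposite Limits

variable {A : Type} [CommRing A]

theorem quotPow_hom_ext {J : Ideal A} {t : ℕ} {Q : ModuleCat.{0} A} {f g : quotPow J t ⟶ Q}
    (h : f.hom (1 : A ⧸ J ^ t) = g.hom (1 : A ⧸ J ^ t)) : f = g := by
  refine ModuleCat.hom_ext (LinearMap.ext fun r => ?_)
  obtain ⟨r, rfl⟩ := Submodule.Quotient.mk_surjective _ r
  have : (Submodule.Quotient.mk r : A ⧸ J ^ t) = r • (1 : A ⧸ J ^ t) := by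
    rw [Algebra.smul_def, mul_one]; rfl
  rw [this]
  exact (map_smul f.hom r _).trans ((congrArg (r • ·) h).trans (map_smul g.hom r _).symm)

theorem exists_quotPow_hom {J : Ideal A} {t : ℕ} {Q : ModuleCat.{0} A} (q : Q)
    (h : ∀ b ∈ J ^ t, b • q = 0) : ∃ f : quotPow J t ⟶ Q, f.hom (1 : A ⧸ J ^ t) = q :=
  ⟨ModuleCat.ofHom (Submodule.liftQ (J ^ t) (LinearMap.toSpanSingleton A Q q)
    fun b hb => h b hb), one_smul A q⟩

theorem quotPow_hom_torsion {J : Ideal A} {t : ℕ} {Q : ModuleCat.{0} A} (f : quotPow J t ⟶ Q)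
    (b : A) (hb : b ∈ J ^ t) : b • f.hom (1 : A ⧸ J ^ t) = 0 := by
  rw [← map_smul]
  have : b • (1 : A ⧸ J ^ t) = 0 := by
    rw [Algebra.smul_def, mul_one]; exact Ideal.Quotient.eq_zero_iff_mem.2 hb
  exact (congrArg f.hom this).trans (map_zero _)

/-- In positive degrees the colimit of `Ext^n(A / J ^ t, M)` is the cohomology of the
`J`-power-torsion subcomplex of an injective resolution of `M`: a cocycle `A / J ^ t → I^n` is the
same as a cocycle in `I^n` killed by `J ^ t`. -/
theorem localCohomology_equiv_coh (J : Ideal A) (l : List A)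
    (hl : ∀ (Q : ModuleCat.{0} A) (q : Q), q ∈ torsList l Q ↔ ∃ t : ℕ, ∀ b ∈ J ^ t, b • q = 0)
    {M : ModuleCat.{0} A} (I : InjectiveResolution M) (p : ℕ) :
    Nonempty ((localCohomology J (p + 1)).obj M ≃ₗ[A]
      Coh (fun n => I.cocomplex.X n) (fun n => (I.cocomplex.d n (n + 1)).hom) l (p + 1)) := by
  obtain ⟨i, hrep, htr, hz⟩ := exists_lcCocone J (p + 1) M
  let P : ((localCohomology J (p + 1)).obj M ×
      Coh (fun n => I.cocomplex.X n) (fun n => (I.cocomplex.d n (n + 1)).hom) l (p + 1)) → Prop :=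
    fun xy => ∃ (t : ℕ) (e : extStage J (p + 1) M t) (f : quotPow J t ⟶ I.cocomplex.X (p + 1))
      (z : cyc (fun n => I.cocomplex.X n) (fun n => (I.cocomplex.d n (n + 1)).hom) l (p + 1)),
      InjRep I (quotPow J t) (p + 1) e f ∧ (i t).hom e = xy.1 ∧
        f.hom (1 : A ⧸ J ^ t) = (z : I.cocomplex.X (p + 1)) ∧ Submodule.Quotient.mk z = xy.2
  have hcyc : ∀ (t : ℕ) (f : quotPow J t ⟶ I.cocomplex.X (p + 1)),
      f ≫ I.cocomplex.d (p + 1) (p + 1 + 1) = 0 → f.hom (1 : A ⧸ J ^ t) ∈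
        cyc (fun n => I.cocomplex.X n) (fun n => (I.cocomplex.d n (n + 1)).hom) l (p + 1) :=
    fun t f hf => ⟨(hl _ _).2 ⟨t, quotPow_hom_torsion f⟩,
      LinearMap.mem_ker.2 (congrArg (fun g => g.hom (1 : A ⧸ J ^ t)) hf)⟩
  have hup : ∀ {t s : ℕ} (h : t ≤ s) (e : extStage J (p + 1) M t)
      (f : quotPow J t ⟶ I.cocomplex.X (p + 1)), InjRep I (quotPow J t) (p + 1) e f →
      InjRep I (quotPow J s) (p + 1) ((extTrans J (p + 1) M h).hom e) (quotPowMap J h ≫ f) :=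
    fun h e f r => r.map (quotPowMap J h)
  let G : Submodule A ((localCohomology J (p + 1)).obj M ×
      Coh (fun n => I.cocomplex.X n) (fun n => (I.cocomplex.d n (n + 1)).hom) l (p + 1)) :=
    { carrier := {xy | P xy}
      zero_mem' := by
        obtain ⟨e, he⟩ := InjRep.exists_class (I := I) (X := quotPow J 0) (n := p + 1) 0 (by simp)
        have h0 := (he.eq_zero_iff rfl).2 ⟨0, by simp⟩
        exact ⟨0, e, 0, 0, he, by rw [h0, map_zero]; rfl, rfl, rfl⟩
      add_mem' := by
        rintro ⟨x, y⟩ ⟨x', y'⟩ ⟨t, e, f, z, hr, rfl, hf, rfl⟩ ⟨t', e', f', z', hr', rfl, hf', rfl⟩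
        refine ⟨t + t', _, _, z + z', (hup (Nat.le_add_right t t') e f hr).add
          (hup (Nat.le_add_left t' t) e' f' hr'), ?_, ?_, rfl⟩
        · rw [map_add, htr, htr]; rfl
        · exact congrArg₂ (· + ·) hf hf'
      smul_mem' := by
        rintro c ⟨x, y⟩ ⟨t, e, f, z, hr, rfl, hf, rfl⟩
        exact ⟨t, c • e, c • f, c • z, hr.smul c, map_smul _ _ _, congrArg (c • ·) hf, rfl⟩ }
  refine exists_linearEquiv_of_graph G (fun x => ?_) (fun y => ?_) (fun y hy => ?_) fun x hx => ?_
  · obtain ⟨t, e, rfl⟩ := hrep x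
    obtain ⟨f, hf⟩ := InjRep.exists_cocycle I e
    exact ⟨_, t, e, f, ⟨_, hcyc t f hf.1⟩, hf, rfl, rfl, rfl⟩
  · obtain ⟨z, rfl⟩ := Submodule.Quotient.mk_surjective _ y
    obtain ⟨t, ht⟩ := (hl _ _).1 z.2.1
    obtain ⟨f, hf⟩ := exists_quotPow_hom (J := J) (t := t) (Q := I.cocomplex.X (p + 1)) _ ht
    obtain ⟨e, he⟩ := InjRep.exists_class (I := I) (n := p + 1) f (quotPow_hom_ext (by
      change (I.cocomplex.d (p + 1) (p + 1 + 1)).hom (f.hom (1 : A ⧸ J ^ t)) = _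
      rw [hf]
      exact z.2.2))
    exact ⟨_, t, e, f, z, he, rfl, hf, rfl⟩
  · obtain ⟨t, e, f, z, hr, he, hf, rfl⟩ := hy
    obtain ⟨s, h, hs⟩ := hz t e he
    obtain ⟨b, hb⟩ := ((hup h e f hr).eq_zero_iff rfl).1 hs
    refine (coh_mk_eq_zero _).2 ⟨b.hom (1 : A ⧸ J ^ s), (hl _ _).2 ⟨s, quotPow_hom_torsion b⟩, ?_⟩
    rw [← hf]
    exact congrArg (fun g => g.hom (1 : A ⧸ J ^ s)) hb
  · obtain ⟨t, e, f, z, hr, rfl, hf, hz0⟩ := hx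
    obtain ⟨q, hq, hqz⟩ := (coh_mk_eq_zero _).1 hz0
    obtain ⟨s, hs⟩ := (hl _ _).1 hq
    obtain ⟨b, hb⟩ := exists_quotPow_hom (J := J) (t := t + s) (Q := I.cocomplex.X p) q
      fun c hc => hs c (Ideal.pow_le_pow_right (Nat.le_add_left s t) hc)
    have h0 := ((hup (Nat.le_add_right t s) e f hr).eq_zero_iff rfl).2 ⟨b, quotPow_hom_ext (by
      change (I.cocomplex.d p (p + 1)).hom (b.hom (1 : A ⧸ J ^ (t + s))) = f.hom (1 : A ⧸ J ^ t)
      rw [hb, hf]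
      exact hqz)⟩
    change (i t).hom e = 0
    rw [← htr (Nat.le_add_right t s), h0, map_zero]

end LocalCohomologyTorsion

section LocalCohomologyCech

open CategoryTheory Opposite Limits

variable {A : Type} [CommRing A]

theorem torsList_iff_pow [IsNoetherianRing A] (J : Ideal A) (l : List A)
    (h₁ : ∀ x ∈ l, x ∈ J) (h₂ : ∃ k, J ^ k ≤ Ideal.span {y | y ∈ l}) (Q : ModuleCat.{0} A) (q : Q) :
    q ∈ torsList l Q ↔ ∃ t : ℕ, ∀ b ∈ J ^ t, b • q = 0 := by
  constructor
  · intro hq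
    obtain ⟨t, ht⟩ := exists_pow_smul_eq_zero hq
    obtain ⟨k, hk⟩ := h₂
    refine ⟨k * t, fun b hb => ht b ?_⟩
    rw [pow_mul] at hb
    exact Ideal.pow_right_mono hk t hb
  · rintro ⟨t, ht⟩ x hx
    exact ⟨t, ht _ (Ideal.pow_mem_pow (h₁ x hx) t)⟩

/-- Local cohomology in the degree given by the length of a sequence which generates `J` up to
powers is the top Čech cohomology along that sequence. -/
theorem localCohomology_equiv_iterQuot [IsNoetherianRing A] (J : Ideal A) (l : List A)
    (h₁ : ∀ x ∈ l, x ∈ J) (h₂ : ∃ k, J ^ k ≤ Ideal.span {y | y ∈ l}) {n : ℕ} (hn : n ≠ 0)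
    (hln : l.length = n) (M : ModuleCat.{0} A) :
    Nonempty ((localCohomology J n).obj M ≃ₗ[A] iterQuot M l) := by
  let I : InjectiveResolution M := injectiveResolution M
  have hd : ∀ n q, (I.cocomplex.d (n + 1) (n + 1 + 1)).hom ((I.cocomplex.d n (n + 1)).hom q) = 0 :=
    fun n q => congrArg (fun g => g.hom q) (I.cocomplex.d_comp_d n (n + 1) (n + 1 + 1))
  have hinj : ∀ n, Module.Injective A (I.cocomplex.X n) :=
    fun n => by
      have : Injective (ModuleCat.of A (I.cocomplex.X n)) := I.injective n
      exact Module.injective_module_of_injective_object A _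
  have hnil : ∀ (N : Type) [AddCommGroup N] [Module A N] (x : N), x ∈ torsList ([] : List A) N :=
    fun N _ _ x y hy => by simp at hy
  have hex : ∀ n, Subsingleton
      (Coh (fun n => I.cocomplex.X n) (fun n => (I.cocomplex.d n (n + 1)).hom) [] (n + 1)) := by
    refine fun n => ⟨fun a b => ?_⟩
    have key : ∀ a : Coh (fun n => I.cocomplex.X n)
        (fun n => (I.cocomplex.d n (n + 1)).hom) [] (n + 1), a = 0 := by
      intro a
      obtain ⟨z, rfl⟩ := Submodule.Quotient.mk_surjective _ a
      have hz : (I.cocomplex.d (n + 1) (n + 1 + 1)).hom (z : I.cocomplex.X (n + 1)) = 0 := z.2.2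
      obtain ⟨q, hq⟩ := (ShortComplex.moduleCat_exact_iff _).1 (I.exact_succ n) z hz
      exact (coh_mk_eq_zero _).2 ⟨q, hnil _ _, hq⟩
    rw [key a, key b]
  have h0 : Nonempty (Coh (fun n => I.cocomplex.X n) (fun n => (I.cocomplex.d n (n + 1)).hom) [] 0
      ≃ₗ[A] M) := by
    have hmem : ∀ m : M, (I.ι.f 0).hom m ∈
        cyc (fun n => I.cocomplex.X n) (fun n => (I.cocomplex.d n (n + 1)).hom) [] 0 := fun m =>
      ⟨hnil _ _, LinearMap.mem_ker.2 (congrArg (fun g => g.hom m) I.ι_f_zero_comp_complex_d)⟩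
    let g : M →ₗ[A] Coh (fun n => I.cocomplex.X n) (fun n => (I.cocomplex.d n (n + 1)).hom) [] 0 :=
      (Submodule.mkQ _).comp ((I.ι.f 0).hom.codRestrict _ hmem)
    refine ⟨(LinearEquiv.ofBijective g ⟨?_, ?_⟩).symm⟩
    · refine (injective_iff_map_eq_zero g).2 fun m hm => ?_
      have h : (I.ι.f 0).hom m = 0 := (coh_mk_eq_zero _).1 hm
      exact (ModuleCat.mono_iff_injective (I.ι.f 0)).1 inferInstance (h.trans (map_zero _).symm)
    · intro a
      obtain ⟨z, rfl⟩ := Submodule.Quotient.mk_surjective _ a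
      have hz : (I.cocomplex.d 0 (0 + 1)).hom (z : I.cocomplex.X 0) = 0 := z.2.2
      obtain ⟨m, hm⟩ := (ShortComplex.moduleCat_exact_iff _).1 I.exact₀ z hz
      exact ⟨m, congrArg (Submodule.Quotient.mk) (Subtype.ext hm)⟩
  obtain ⟨-, ⟨e⟩⟩ := coh_iterQuot (fun n => I.cocomplex.X n)
    (fun n => (I.cocomplex.d n (n + 1)).hom) hd hinj M h0 hex l
  obtain ⟨p, rfl⟩ := Nat.exists_eq_succ_of_ne_zero hn
  rw [hln] at e
  obtain ⟨f⟩ := localCohomology_equiv_coh J l (torsList_iff_pow J l h₁ h₂) I p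
  exact ⟨f.trans e⟩

end LocalCohomologyCech

/-! ### The twisted double `R ⊕ ω` -/

section TwistedDouble

/-- Coordinates on the twisted double. The maps `re : S → R` and `im : S → R`, the latter with image
`ω`, identify `S` with `R ⊕ ω` carrying `(r, x)(r', x') = (r r' + x x' a, r x' + r' x)`. -/
structure TwistedCoords {R S : Type} [CommRing R] [CommRing S] [Algebra R S] (ω : Ideal R) (a : R)
    (re : S →ₗ[R] R) (im : S →ₗ[R] R) : Prop where
  ext : ∀ s t, re s = re t → im s = im t → s = t
  im_mem : ∀ s, im s ∈ ω
  surj : ∀ r, ∀ x ∈ ω, ∃ s, re s = r ∧ im s = x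
  re_one : re 1 = 1
  im_one : im 1 = 0
  re_mul : ∀ s t, re (s * t) = re s * re t + a * (im s * im t)
  im_mul : ∀ s t, im (s * t) = re s * im t + im s * re t

theorem exists_twistedCoords {R S : Type} [CommRing R] [CommRing S] [Algebra R S] (ω : Ideal R)
    (a : R) (j : S →ₐ[R] (R[X] ⧸ Ideal.span {(X : R[X]) ^ 2 - C a}))
    (hj : Function.Injective j)
    (hrange : Set.range j =
      {y | ∃ r x', x' ∈ ω ∧ y = Ideal.Quotient.mk _ (C r + C x' * X)}) :
    ∃ re im : S →ₗ[R] R, TwistedCoords ω a re im := by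
  let φ : (R[X] ⧸ Ideal.span {(X : R[X]) ^ 2 - C a}) →ₐ[R] QuadraticAlgebra R a 0 :=
    Ideal.Quotient.liftₐ _ (aeval (QuadraticAlgebra.omega : QuadraticAlgebra R a 0)) (by
      intro p hp
      obtain ⟨q, rfl⟩ := Ideal.mem_span_singleton.1 hp
      have : aeval (QuadraticAlgebra.omega : QuadraticAlgebra R a 0) ((X : R[X]) ^ 2 - C a) = 0 := by
        rw [map_sub, map_pow, aeval_X, aeval_C, pow_two]
        ext <;> simp [QuadraticAlgebra.omega]
      rw [map_mul, this, zero_mul])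
  have hφ : ∀ r x, φ (Ideal.Quotient.mk _ (C r + C x * X)) = ⟨r, x⟩ := by
    intro r x
    change aeval (QuadraticAlgebra.omega : QuadraticAlgebra R a 0) (C r + C x * X) = _
    rw [map_add, map_mul, aeval_X, aeval_C, aeval_C]
    ext <;> simp [QuadraticAlgebra.omega]
  have hrep : ∀ s, ∃ r x, x ∈ ω ∧ j s = Ideal.Quotient.mk _ (C r + C x * X) ∧ φ (j s) = ⟨r, x⟩ := by
    intro s
    have hs : j s ∈ Set.range j := ⟨s, rfl⟩
    rw [hrange] at hs
    obtain ⟨r, x, hx, h⟩ := hs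
    exact ⟨r, x, hx, h, by rw [h, hφ]⟩
  refine ⟨(QuadraticAlgebra.reₗ a 0).comp (φ.comp j).toLinearMap,
    (QuadraticAlgebra.imₗ a 0).comp (φ.comp j).toLinearMap, ?_, ?_, ?_, ?_, ?_, ?_, ?_⟩
  · intro s t h₁ h₂
    have h₁ : (φ (j s)).re = (φ (j t)).re := h₁
    have h₂ : (φ (j s)).im = (φ (j t)).im := h₂
    obtain ⟨r, x, -, hs, es⟩ := hrep s
    obtain ⟨r', x', -, ht, et⟩ := hrep t
    rw [es, et] at h₁ h₂
    obtain rfl : r = r' := h₁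
    obtain rfl : x = x' := h₂
    exact hj (hs.trans ht.symm)
  · intro s
    obtain ⟨r, x, hx, -, h⟩ := hrep s
    change (φ (j s)).im ∈ ω
    rw [h]
    exact hx
  · intro r x hx
    obtain ⟨s, hs⟩ : Ideal.Quotient.mk _ (C r + C x * X) ∈ Set.range j := by
      rw [hrange]
      exact ⟨r, x, hx, rfl⟩
    have h : φ (j s) = ⟨r, x⟩ := by rw [hs, hφ]
    exact ⟨s, congrArg QuadraticAlgebra.re h, congrArg QuadraticAlgebra.im h⟩
  · change (φ (j 1)).re = 1
    rw [map_one, map_one]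
    rfl
  · change (φ (j 1)).im = 0
    rw [map_one, map_one]
    rfl
  · intro s t
    change (φ (j (s * t))).re = (φ (j s)).re * (φ (j t)).re + a * ((φ (j s)).im * (φ (j t)).im)
    rw [map_mul, map_mul, QuadraticAlgebra.re_mul, mul_assoc]
  · intro s t
    change (φ (j (s * t))).im = (φ (j s)).re * (φ (j t)).im + (φ (j s)).im * (φ (j t)).re
    rw [map_mul, map_mul, QuadraticAlgebra.im_mul]
    simp

namespace TwistedCoords

variable {R S : Type} [CommRing R] [CommRing S] [Algebra R S] {ω : Ideal R} {a : R}
  {re im : S →ₗ[R] R} (h : TwistedCoords ω a re im)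

include h

theorem re_algebraMap (r : R) : re (algebraMap R S r) = r := by
  rw [Algebra.algebraMap_eq_smul_one, map_smul, h.re_one, smul_eq_mul, mul_one]

theorem im_algebraMap (r : R) : im (algebraMap R S r) = 0 := by
  rw [Algebra.algebraMap_eq_smul_one, map_smul, h.im_one, smul_zero]

theorem finite [IsNoetherianRing R] : Module.Finite R S := by
  refine Module.Finite.of_injective (re.prod im) fun s t e => ?_
  exact h.ext s t (congrArg Prod.fst e) (congrArg Prod.snd e)

theorem isNoetherianRing [IsNoetherianRing R] : IsNoetherianRing S := by
  have := h.finite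
  exact isNoetherian_of_tower R (inferInstance : IsNoetherian R S)

/-- The maximal ideal of `S` is `𝔪 ⊕ ω`; a unit `re s` makes the norm
`(re s)² - a (im s)²` a unit. -/
theorem mem_maximalIdeal_iff [IsLocalRing R] [IsLocalRing S] (ham : a ∈ maximalIdeal R) (s : S) :
    s ∈ maximalIdeal S ↔ re s ∈ maximalIdeal R := by
  rw [mem_maximalIdeal, mem_maximalIdeal, mem_nonunits_iff, mem_nonunits_iff, not_iff_not]
  constructor
  · intro hs
    obtain ⟨t, ht⟩ := hs.exists_right_inv
    have e := h.re_mul s t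
    rw [ht, h.re_one] at e
    by_contra hn
    have h1 : re s ∈ maximalIdeal R := hn
    have h2 : (1 : R) ∈ maximalIdeal R := by
      rw [e]
      exact add_mem (Ideal.mul_mem_right _ _ h1) (Ideal.mul_mem_right _ _ ham)
    exact (maximalIdeal R).ne_top_iff_one.1 (maximalIdeal.isMaximal R).ne_top h2
  · intro hs
    obtain ⟨t, ht1, ht2⟩ := h.surj (re s) (-(im s)) (ω.neg_mem (h.im_mem s))
    have e : s * t = algebraMap R S (re s * re s - a * (im s * im s)) := by
      apply h.ext
      · rw [h.re_mul, h.re_algebraMap, ht1, ht2]; ring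
      · rw [h.im_mul, h.im_algebraMap, ht1, ht2]; ring
    have hu : IsUnit (re s * re s - a * (im s * im s)) := by
      by_contra hn
      have h1 : re s * re s - a * (im s * im s) ∈ maximalIdeal R := hn
      have h2 : re s * re s ∈ maximalIdeal R := by
        have := add_mem h1 (Ideal.mul_mem_right (im s * im s) _ ham)
        rwa [sub_add_cancel] at this
      exact h2 (hs.mul hs)
    exact isUnit_of_mul_isUnit_left (e ▸ hu.map (algebraMap R S))

theorem map_maximalIdeal_le [IsLocalRing R] [IsLocalRing S] (ham : a ∈ maximalIdeal R) :
    (maximalIdeal R).map (algebraMap R S) ≤ maximalIdeal S := by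
  rw [Ideal.map_le_iff_le_comap]
  intro r hr
  rw [Ideal.mem_comap, h.mem_maximalIdeal_iff ham, h.re_algebraMap]
  exact hr

end TwistedCoords

end TwistedDouble

section TwistedDoubleDuality

/-- A Noetherian local ring of dimension `d` has a system of parameters. -/
theorem exists_systemOfParameters (R : Type) [CommRing R] [IsNoetherianRing R] [IsLocalRing R]
    (d : ℕ) (hdim : ringKrullDim R = d) :
    ∃ l : List R, l.length = d ∧ (∀ x ∈ l, x ∈ maximalIdeal R) ∧
      ∃ k, maximalIdeal R ^ k ≤ Ideal.span {y | y ∈ l} := by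
  obtain ⟨s, hs, hc⟩ := (maximalIdeal R).exists_finset_card_eq_height_of_isNoetherianRing
  have hd : (maximalIdeal R).height = d := by
    have := IsLocalRing.maximalIdeal_height_eq_ringKrullDim (R := R)
    rw [hdim] at this
    exact_mod_cast this
  have hset : {y | y ∈ s.toList} = (s : Set R) := by ext; simp
  refine ⟨s.toList, ?_, fun x hx => ?_, ?_⟩
  · rw [Finset.length_toList]
    rw [hd] at hc
    exact_mod_cast hc
  · exact hs.1.2 (Ideal.subset_span (by simpa using hx))
  · rw [hset]
    refine Ideal.exists_pow_le_of_le_radical_of_fg ?_ (IsNoetherian.noetherian _)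
    -- A prime over the ideal lies below the maximal ideal, hence equals it by minimality.
    rw [Ideal.radical_eq_sInf]
    refine le_sInf fun P hP => ?_
    have := hP.2
    exact hs.2 ⟨hP.2, hP.1⟩ (le_maximalIdeal hP.2.ne_top)

namespace TwistedCoords

variable {R S : Type} [CommRing R] [CommRing S] [Algebra R S] {ω : Ideal R} {a : R}
  {re im : S →ₗ[R] R} (h : TwistedCoords ω a re im)

include h

/-- `𝔫² ⊆ 𝔪 S`, because `(r, x)(r', x') = r (r', x') + r' (0, x) + (x x' a, 0)` and `a ∈ 𝔪`. -/
theorem maximalIdeal_sq_le [IsLocalRing R] [IsLocalRing S] (ham : a ∈ maximalIdeal R) :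
    maximalIdeal S ^ 2 ≤ (maximalIdeal R).map (algebraMap R S) := by
  rw [pow_two, Ideal.mul_le]
  intro s hs t ht
  rw [h.mem_maximalIdeal_iff ham] at hs ht
  obtain ⟨p, hp1, hp2⟩ := h.surj 0 (im s) (h.im_mem s)
  obtain ⟨q, hq1, hq2⟩ := h.surj 0 (im t) (h.im_mem t)
  have es : s = algebraMap R S (re s) + p := by
    apply h.ext
    · rw [map_add, h.re_algebraMap, hp1, add_zero]
    · rw [map_add, h.im_algebraMap, hp2, zero_add]
  have et : t = algebraMap R S (re t) + q := by
    apply h.ext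
    · rw [map_add, h.re_algebraMap, hq1, add_zero]
    · rw [map_add, h.im_algebraMap, hq2, zero_add]
  have epq : p * q = algebraMap R S (a * (im s * im t)) := by
    apply h.ext
    · rw [h.re_mul, h.re_algebraMap, hp1, hp2, hq1, hq2]; ring
    · rw [h.im_mul, h.im_algebraMap, hp1, hq1]; ring
  have e : s * t = algebraMap R S (re s) * t + algebraMap R S (re t) * p
      + algebraMap R S (a * (im s * im t)) := by
    rw [← epq]
    linear_combination t * es + p * et
  rw [e]
  exact add_mem (add_mem (Ideal.mul_mem_right _ _ (Ideal.mem_map_of_mem _ hs))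
    (Ideal.mul_mem_right _ _ (Ideal.mem_map_of_mem _ ht)))
    (Ideal.mem_map_of_mem _ (Ideal.mul_mem_right _ _ ham))

/-- `Hom_R(S, ω) ≅ S`: since `R` is normal, `End_R(ω) = R`, and therefore every `R`-linear map
`S → ω` is `s ↦ im (σ s)` for a unique `σ`. -/
theorem existsUnique_functional [IsDomain R] [IsNoetherianRing R] [IsIntegrallyClosed R]
    (hω : ω ≠ ⊥) (φ : S →ₗ[R] ω) : ∃! σ : S, ∀ s, (φ s : R) = im (σ * s) := by
  -- `k x` is the element `(0, x)` of `S`.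
  choose k hk1 hk2 using fun x : ω => h.surj 0 x x.2
  obtain ⟨x₀, hx₀, hne⟩ := Submodule.exists_mem_ne_zero_of_ne_bot hω
  have hθ : ∀ (x : ω), x₀ * (φ (k x) : R) = x * φ (k ⟨x₀, hx₀⟩) := by
    intro x
    have e : x₀ • k x = (x : R) • k ⟨x₀, hx₀⟩ := by
      apply h.ext
      · simp [hk1]
      · simp [hk2, mul_comm]
    have := congrArg (fun s => (φ s : R)) e
    simpa using this
  -- On `ω` the map is multiplication by a fraction `c` with `c ω ⊆ ω`, so `c` is integral over `R`.
  obtain ⟨r, hr⟩ : ∃ r : R, ∀ x : ω, (φ (k x) : R) = r * x := by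
    let K := FractionRing R
    have hne' : algebraMap R K x₀ ≠ 0 := by
      simpa using hne
    let c : K := algebraMap R K (φ (k ⟨x₀, hx₀⟩)) / algebraMap R K x₀
    have hc : ∀ x : ω, c * algebraMap R K x = algebraMap R K (φ (k x)) := by
      intro x
      have := congrArg (algebraMap R K) (hθ x)
      rw [map_mul, map_mul] at this
      rw [div_mul_eq_mul_div, div_eq_iff hne', mul_comm (algebraMap R K (φ (k x))), this, mul_comm]
    have hcint : IsIntegral R c := by
      refine isIntegral_of_smul_mem_submodule (M := K) (Submodule.map (Algebra.linearMap R K) ω) ?_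
        ((IsNoetherian.noetherian ω).map _) c ?_
      · intro hb
        have : algebraMap R K x₀ ∈ Submodule.map (Algebra.linearMap R K) ω := ⟨x₀, hx₀, rfl⟩
        rw [hb] at this
        exact hne' this
      · rintro _ ⟨x, hx, rfl⟩
        exact ⟨_, (φ (k ⟨x, hx⟩)).2, (hc ⟨x, hx⟩).symm⟩
    obtain ⟨r, hr⟩ := IsIntegrallyClosed.isIntegral_iff.1 hcint
    refine ⟨r, fun x => IsFractionRing.injective R K ?_⟩
    rw [← hc x, map_mul, hr]
  obtain ⟨σ, hσ1, hσ2⟩ := h.surj r (φ 1) (φ 1).2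
  refine ⟨σ, fun s => ?_, fun τ hτ => ?_⟩
  · have es : s = re s • (1 : S) + k ⟨im s, h.im_mem s⟩ := by
      apply h.ext
      · simp [h.re_one, hk1]
      · simp [h.im_one, hk2]
    rw [h.im_mul, hσ1, hσ2]
    conv_lhs => rw [es]
    rw [map_add, map_smul]
    simp only [Submodule.coe_add, Submodule.coe_smul, smul_eq_mul, hr]
    ring
  · apply h.ext
    · have := hτ (k ⟨x₀, hx₀⟩)
      rw [hr, h.im_mul, hk1, hk2, mul_zero, add_zero] at this
      rw [hσ1]
      exact (mul_right_cancel₀ hne this).symm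
    · have := hτ 1
      rw [mul_one] at this
      rw [hσ2, this]

/-- `H^d_𝔫(S) ≅ S ⊗ H^d_𝔪(R)`: a system of parameters of `R` also generates `𝔫` up
to powers, and top Čech cohomology commutes with base change. -/
theorem exists_localCohomology_equiv [IsNoetherianRing R] [IsLocalRing R] [IsLocalRing S]
    (ham : a ∈ maximalIdeal R) {d : ℕ} (hd : d ≠ 0) (hdim : ringKrullDim R = d) :
    Nonempty ((localCohomology (maximalIdeal S) d).obj (ModuleCat.of S S) ≃ₗ[S]
      TensorProduct R S ((localCohomology (maximalIdeal R) d).obj (ModuleCat.of R R))) := by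
  have := h.isNoetherianRing
  obtain ⟨l, hl, hlm, k, hk⟩ := exists_systemOfParameters R d hdim
  obtain ⟨e₁⟩ := localCohomology_equiv_iterQuot (maximalIdeal R) l hlm ⟨k, hk⟩ hd hl
    (ModuleCat.of R R)
  obtain ⟨e₂⟩ := localCohomology_equiv_iterQuot (maximalIdeal S) (l.map (algebraMap R S))
    (fun x hx => by
      obtain ⟨y, hy, rfl⟩ := List.mem_map.1 hx
      exact h.map_maximalIdeal_le ham (Ideal.mem_map_of_mem _ (hlm y hy)))
    ⟨2 * k, by
      rw [pow_mul]
      refine (Ideal.pow_right_mono (h.maximalIdeal_sq_le ham) k).trans ?_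
      rw [← Ideal.map_pow]
      refine (Ideal.map_mono hk).trans ?_
      rw [Ideal.map_span]
      refine Ideal.span_mono ?_
      rintro _ ⟨y, hy, rfl⟩
      exact List.mem_map_of_mem hy⟩ hd (by rw [List.length_map, hl]) (ModuleCat.of S S)
  obtain ⟨e₃⟩ := iterQuot_baseChange (S := S) (ModuleCat.of R R) (ModuleCat.of S S)
    (TensorProduct.AlgebraTensorModule.rid R S S).symm l
  exact ⟨e₂.trans (e₃.trans (TensorProduct.AlgebraTensorModule.congr (LinearEquiv.refl S S) e₁.symm))⟩

end TwistedCoords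

end TwistedDoubleDuality

section DualOfDouble

open TensorProduct

/-- If `T` has `R`-dual `ω`, then `H = S ⊗ T` has `R`-dual
`Hom_R(S, Hom_R(T, E)) = Hom_R(S, ω) = S`. -/
theorem TwistedCoords.exists_dual_equiv {R S : Type} [CommRing R] [CommRing S] [Algebra R S]
    {ω : Ideal R} {a : R} {re im : S →ₗ[R] R} (h : TwistedCoords ω a re im)
    [IsDomain R] [IsNoetherianRing R] [IsIntegrallyClosed R] (hω : ω ≠ ⊥)
    {E T H : Type} [AddCommGroup E] [Module R E] [AddCommGroup T] [Module R T]
    [AddCommGroup H] [Module R H] [Module S H] [IsScalarTower R S H]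
    (κ : (T →ₗ[R] E) ≃ₗ[R] ω) (ε : H ≃ₗ[S] S ⊗[R] T) :
    ∃ e : (H →ₗ[R] E) ≃ S, (∀ f g, e (f + g) = e f + e g) ∧
      ∀ (s : S) (f g : H →ₗ[R] E), (∀ x, g x = f (s • x)) → e g = s * e f := by
  let Φ : (H →ₗ[R] E) ≃ₗ[R] (S →ₗ[R] ω) :=
    (LinearEquiv.congrLeft E R (ε.restrictScalars R)).trans
      ((TensorProduct.lift.equiv (RingHom.id R) S T E).symm.trans (LinearEquiv.congrRight κ))
  have hΦ : ∀ f s, Φ f s = κ (f ∘ₗ (ε.symm.restrictScalars R).toLinearMap ∘ₗ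
      TensorProduct.mk R S T s) := fun f s => rfl
  have huniq := h.existsUnique_functional hω
  choose σ hσ hσ' using huniq
  let Ψ : S → (S →ₗ[R] ω) := fun σ =>
    (im.comp (LinearMap.mulLeft R σ)).codRestrict ω fun s => h.im_mem _
  let e : (H →ₗ[R] E) ≃ S :=
    { toFun := fun f => σ (Φ f)
      invFun := fun s => Φ.symm (Ψ s)
      left_inv := fun f => by
        rw [LinearEquiv.symm_apply_eq]
        exact LinearMap.ext fun s => Subtype.ext (hσ (Φ f) s).symm
      right_inv := fun s => by
        dsimp only
        rw [LinearEquiv.apply_symm_apply]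
        exact (hσ' (Ψ s) s fun _ => rfl).symm }
  refine ⟨e, fun f g => (hσ' _ _ fun s => ?_).symm, fun s f g hfg => (hσ' _ _ fun t => ?_).symm⟩
  · change ((Φ (f + g) s : ω) : R) = im ((σ (Φ f) + σ (Φ g)) * s)
    rw [add_mul, map_add im, ← hσ, ← hσ, map_add Φ]
    rfl
  · change ((Φ g t : ω) : R) = im (s * σ (Φ f) * t)
    have e1 : Φ g t = Φ f (s * t) := by
      rw [hΦ, hΦ]
      congr 1
      refine LinearMap.ext fun x => (hfg _).trans (congrArg f ?_)
      change s • ε.symm (t ⊗ₜ x) = ε.symm ((s * t) ⊗ₜ x)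
      rw [← map_smul]
      rfl
    rw [e1, hσ]
    congr 1
    ring

end DualOfDouble

/-! ### Injective hulls of the residue field -/

section InjectiveHullResidueField

variable {R : Type} [CommRing R] [IsLocalRing R] {E : Type} [AddCommGroup E] [Module R E]

theorem smul_residueField_eq_zero {r : R} (hr : r ∈ maximalIdeal R) (k : ResidueField R) :
    r • k = 0 := by
  obtain ⟨s, rfl⟩ := residue_surjective k
  rw [Algebra.smul_def]
  have : algebraMap R (ResidueField R) r = 0 := (residue_eq_zero_iff r).2 hr
  rw [this, zero_mul]

/-- An injective module containing the residue field is a cogenerator. -/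
theorem exists_functional_ne_zero (hE : Module.Injective R E) (ι : ResidueField R →ₗ[R] E)
    (hι : Function.Injective ι) {N : Type} [AddCommGroup N] [Module R N] {n : N} (hn : n ≠ 0) :
    ∃ f : N →ₗ[R] E, f n ≠ 0 := by
  obtain ⟨f, hf⟩ := exists_factor_of_injective hE (LinearMap.toSpanSingleton R N n)
    (ι.comp (Algebra.linearMap R (ResidueField R))) fun r hr => by
      have hr : r • n = 0 := hr
      have hm : r ∈ maximalIdeal R := fun hu => hn ((hu.smul_eq_zero).1 hr)
      have : Algebra.linearMap R (ResidueField R) r = 0 := (residue_eq_zero_iff r).2 hm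
      rw [LinearMap.comp_apply, this, map_zero]
  refine ⟨f, fun h => ?_⟩
  have h1 := hf 1
  rw [LinearMap.toSpanSingleton_apply, one_smul, h] at h1
  have h2 : Algebra.linearMap R (ResidueField R) 1 = 0 := hι (h1.symm.trans (map_zero ι).symm)
  simp at h2

/-- The socle of an essential extension of the residue field is the residue field. -/
theorem socle_injHull (ι : ResidueField R →ₗ[R] E)
    (hess : ∀ N : Submodule R E, N ⊓ LinearMap.range ι = ⊥ → N = ⊥) (x : E)
    (hx : ∀ r ∈ maximalIdeal R, r • x = 0) : ∃ r : R, x = ι (residue R r) := by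
  suffices h : x ∈ LinearMap.range ι by
    obtain ⟨k, rfl⟩ := h
    obtain ⟨r, rfl⟩ := residue_surjective k
    exact ⟨r, rfl⟩
  by_cases hx0 : x = 0
  · rw [hx0]; exact zero_mem _
  have h : R ∙ x ⊓ LinearMap.range ι ≠ ⊥ := fun h =>
    hx0 (Submodule.span_singleton_eq_bot.1 (hess _ h))
  obtain ⟨y, ⟨hy1, hy2⟩, hy0⟩ := Submodule.exists_mem_ne_zero_of_ne_bot h
  obtain ⟨r, rfl⟩ := Submodule.mem_span_singleton.1 hy1
  have hr : IsUnit r := by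
    by_contra hn
    exact hy0 (hx r hn)
  obtain ⟨u, rfl⟩ := hr
  have := (LinearMap.range ι).smul_mem (↑u⁻¹ : R) hy2
  rwa [smul_smul, Units.inv_mul, one_smul] at this

/-- Finitely generated submodules of the injective hull of the residue field are killed by a power
of the maximal ideal: by Artin–Rees, `𝔪 ^ t W` avoids the residue field for large `t`. -/
theorem exists_pow_smul_eq_zero_of_injHull [IsNoetherianRing R] (ι : ResidueField R →ₗ[R] E)
    (hess : ∀ N : Submodule R E, N ⊓ LinearMap.range ι = ⊥ → N = ⊥) (W : Submodule R E)
    (hW : W.FG) : ∃ t, t ≠ 0 ∧ ∀ b ∈ maximalIdeal R ^ t, ∀ w ∈ W, b • w = 0 := by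
  have : Module.Finite R W := Module.Finite.iff_fg.2 hW
  obtain ⟨k, hk⟩ := (maximalIdeal R).exists_pow_inf_eq_pow_smul
    ((LinearMap.range ι).comap W.subtype)
  have h1 := hk (k + 1) (Nat.le_succ k)
  rw [Nat.add_sub_cancel_left, pow_one] at h1
  have h2 : maximalIdeal R • (maximalIdeal R ^ k • (⊤ : Submodule R W) ⊓
      (LinearMap.range ι).comap W.subtype) = ⊥ := by
    rw [eq_bot_iff, Submodule.smul_le]
    rintro r hr w ⟨-, hw⟩
    obtain ⟨c, hc⟩ := hw
    refine (Submodule.mem_bot R).2 (Subtype.ext ?_)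
    change r • (w : E) = 0
    have hc : ι c = w := hc
    rw [← hc, ← map_smul, smul_residueField_eq_zero hr, map_zero]
  rw [h2] at h1
  have h3 := hess ((maximalIdeal R ^ (k + 1) • (⊤ : Submodule R W)).map W.subtype) (by
    rw [eq_bot_iff]
    rintro _ ⟨⟨w, hw, rfl⟩, hw'⟩
    have : w ∈ maximalIdeal R ^ (k + 1) • (⊤ : Submodule R W) ⊓
        (LinearMap.range ι).comap W.subtype := ⟨hw, hw'⟩
    rw [h1] at this
    rw [(Submodule.mem_bot R).1 this]
    exact zero_mem _)
  refine ⟨k + 1, Nat.succ_ne_zero k, fun b hb w hw => ?_⟩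
  have : b • w ∈ (maximalIdeal R ^ (k + 1) • (⊤ : Submodule R W)).map W.subtype :=
    ⟨b • ⟨w, hw⟩, Submodule.smul_mem_smul hb trivial, rfl⟩
  rw [h3] at this
  exact this

end InjectiveHullResidueField

/-! ### Modules whose dual is free of rank one -/

section SelfDuality

variable {R S E H : Type} [CommRing R] [IsLocalRing R] [IsNoetherianRing R] [CommRing S]
  [IsLocalRing S] [Algebra R S] [AddCommGroup E] [Module R E] [AddCommGroup H] [Module R H]
  [Module S H] [IsScalarTower R S H]

/-- `φ` generates the `R`-dual of `H` freely over `S`. -/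
def GeneratesDual (S : Type) [CommRing S] [Module S H] (φ : H →ₗ[R] E) : Prop :=
  ∀ f : H →ₗ[R] E, ∃! s : S, ∀ h, f h = φ (s • h)

/-- The functional `h ↦ φ (s h)`. -/
def twistFunctional (φ : H →ₗ[R] E) (s : S) : H →ₗ[R] E :=
  φ.comp (LinearMap.lsmul S H s |>.restrictScalars R)

omit [IsLocalRing R] [IsNoetherianRing R] [IsLocalRing S] in
theorem twistFunctional_apply (φ : H →ₗ[R] E) (s : S) (h : H) :
    twistFunctional φ s h = φ (s • h) := rfl

omit [IsLocalRing R] [IsNoetherianRing R] [IsLocalRing S] in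
theorem exists_generatesDual (e : (H →ₗ[R] E) ≃ S)
    (he : ∀ (s : S) (f g : H →ₗ[R] E), (∀ x, g x = f (s • x)) → e g = s * e f) :
    ∃ φ : H →ₗ[R] E, GeneratesDual S φ := by
  have key : ∀ s, e (twistFunctional (e.symm 1) s) = s := fun s => by
    rw [he s (e.symm 1) _ fun _ => rfl, e.apply_symm_apply, mul_one]
  refine ⟨e.symm 1, fun f => ⟨e f, fun h => ?_, fun s hs => ?_⟩⟩
  · have : f = twistFunctional (e.symm 1) (e f) := e.injective (key _).symm
    exact congrArg (fun g => g h) this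
  · have : f = twistFunctional (e.symm 1) s := LinearMap.ext hs
    rw [this, key]

omit [IsNoetherianRing R] [IsLocalRing S] [Algebra R S] [IsScalarTower R S H] in
/-- `φ` is nonzero on every nonzero `S`-submodule, as `E` cogenerates. -/
theorem GeneratesDual.eq_zero {φ : H →ₗ[R] E} (hφ : GeneratesDual S φ)
    (hE : Module.Injective R E) (ι : ResidueField R →ₗ[R] E) (hι : Function.Injective ι) (h : H)
    (hh : ∀ s : S, φ (s • h) = 0) : h = 0 := by
  by_contra hn
  obtain ⟨f, hf⟩ := exists_functional_ne_zero hE ι hι hn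
  obtain ⟨s, hs, -⟩ := hφ f
  exact hf ((hs h).trans (hh s))

omit [IsLocalRing R] [IsLocalRing S] in
/-- An element of `S` killing the `J`-torsion of `H` lies in `J S`: the functional `φ(s ·)` factors
through multiplication by generators of `J`. -/
theorem GeneratesDual.mem_map {φ : H →ₗ[R] E} (hφ : GeneratesDual S φ)
    (hE : Module.Injective R E) (J : Ideal R) (s : S)
    (hs : ∀ h : H, (∀ b ∈ J, b • h = 0) → s • h = 0) : s ∈ J.map (algebraMap R S) := by
  obtain ⟨n, g, rfl⟩ := Submodule.fg_iff_exists_fin_generating_family.1 (IsNoetherian.noetherian J)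
  obtain ⟨F, hF⟩ := exists_factor_of_injective hE (LinearMap.pi fun i : Fin n =>
    (LinearMap.lsmul R H (g i))) (twistFunctional φ s) fun h hh => by
      have hh : ∀ i, g i • h = 0 := fun i => congrFun hh i
      rw [twistFunctional_apply, hs h, map_zero]
      intro b hb
      induction hb using Submodule.span_induction with
      | mem x hx => obtain ⟨i, rfl⟩ := hx; exact hh i
      | zero => exact zero_smul _ _
      | add x y _ _ hx hy => rw [add_smul, hx, hy, add_zero]
      | smul c x _ hx => rw [smul_assoc, hx, smul_zero]
  choose σ hσ _ using fun i => hφ (F.comp (LinearMap.single R (fun _ : Fin n => H) i))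
  have e : s = ∑ i, algebraMap R S (g i) * σ i := by
    refine (hφ (twistFunctional φ s)).unique (fun h => rfl) fun h => ?_
    rw [← hF h, Finset.sum_smul, map_sum]
    have : (LinearMap.pi fun i : Fin n => (LinearMap.lsmul R H (g i))) h =
        ∑ i, Pi.single i (g i • h) := (Finset.univ_sum_single fun i => g i • h).symm
    rw [this, map_sum]
    refine Finset.sum_congr rfl fun i _ => ?_
    refine (hσ i (g i • h)).trans (congrArg φ ?_)
    rw [mul_comm, mul_smul, algebraMap_smul]
  rw [e]
  exact sum_mem fun i _ => Ideal.mul_mem_right _ _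
    (Ideal.mem_map_of_mem _ (Submodule.subset_span ⟨i, rfl⟩))

omit [IsLocalRing R] [IsNoetherianRing R] [IsLocalRing S] in
/-- If `S / I` is Artinian and `I` contains the annihilator of a subset `X` of `H` which is killed
by `I`, then already a finite part of `X` has annihilator inside `I`. -/
theorem exists_finite_annihilator (I : Ideal S) [IsArtinianRing (S ⧸ I)] (X : Set H)
    (hIX : ∀ s ∈ I, ∀ x ∈ X, s • x = 0) (hX : ∀ s : S, (∀ x ∈ X, s • x = 0) → s ∈ I) :
    ∃ (n : ℕ) (w : Fin n → H), ∀ s : S, (∀ i, s • w i = 0) → s ∈ I := by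
  classical
  let ann : Finset H → Ideal S := fun W =>
    { carrier := {s | ∀ x ∈ W, s • x = 0}
      zero_mem' := fun x _ => zero_smul _ _
      add_mem' := fun ha hb x hx => by rw [add_smul, ha x hx, hb x hx, add_zero]
      smul_mem' := fun c s hs x hx => by rw [smul_eq_mul, mul_smul, hs x hx, smul_zero] }
  obtain ⟨K, ⟨W, hWX, rfl⟩, hmin⟩ := IsArtinian.set_has_minimal
    {K : Ideal (S ⧸ I) | ∃ W : Finset H, (∀ x ∈ W, x ∈ X) ∧ (ann W).map (Ideal.Quotient.mk I) = K}
    ⟨_, ∅, by simp, rfl⟩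
  have hle : ann W ≤ I := by
    intro s hs
    by_contra hsI
    obtain ⟨x, hx, hsx⟩ : ∃ x ∈ X, s • x ≠ 0 := by
      by_contra hc
      push Not at hc
      exact hsI (hX s hc)
    have hW' : ∀ y ∈ insert x W, y ∈ X := fun y hy => by
      rcases Finset.mem_insert.1 hy with rfl | hy
      exacts [hx, hWX y hy]
    refine hmin _ ⟨insert x W, hW', rfl⟩ (lt_of_le_of_ne (Ideal.map_mono fun t ht y hy =>
      ht y (Finset.mem_insert_of_mem hy)) fun heq => ?_)
    have h1 : Ideal.Quotient.mk I s ∈ (ann (insert x W)).map (Ideal.Quotient.mk I) := by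
      rw [heq]
      exact Ideal.mem_map_of_mem _ hs
    obtain ⟨t, ht, hts⟩ := (Ideal.mem_map_iff_of_surjective _ Ideal.Quotient.mk_surjective).1 h1
    have h2 := hIX _ (Ideal.Quotient.eq.1 hts) x hx
    rw [sub_smul, ht x (Finset.mem_insert_self x W), zero_sub, neg_eq_zero] at h2
    exact hsx h2
  refine ⟨W.card, fun i => (W.equivFin.symm i : H), fun s hs => hle fun x hx => ?_⟩
  have := hs (W.equivFin ⟨x, hx⟩)
  simpa using this

/-- Every `R`-functional `y` on `S` has the form `s ↦ φ (s h)`: by Artin–Rees `y` kills `𝔪 ^ t S`,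
so it factors through finitely many evaluations `s ↦ s w` at `𝔪 ^ t`-torsion elements `w`. -/
theorem GeneratesDual.exists_eq [Module.Finite R S] [IsNoetherianRing S] {φ : H →ₗ[R] E}
    (hφ : GeneratesDual S φ)
    (hE : Module.Injective R E) (ι : ResidueField R →ₗ[R] E)
    (hess : ∀ N : Submodule R E, N ⊓ LinearMap.range ι = ⊥ → N = ⊥)
    (hmS : (maximalIdeal R).map (algebraMap R S) ≤ maximalIdeal S)
    (hSm : maximalIdeal S ^ 2 ≤ (maximalIdeal R).map (algebraMap R S))
    (y : S →ₗ[R] E) : ∃ h : H, ∀ s, y s = φ (s • h) := by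
  obtain ⟨t, ht0, ht⟩ := exists_pow_smul_eq_zero_of_injHull ι hess (LinearMap.range y)
    (LinearMap.range_eq_map y ▸ Module.Finite.fg_top.map y)
  set I : Ideal S := (maximalIdeal R ^ t).map (algebraMap R S) with hI
  have hIle : I ≤ maximalIdeal S :=
    (Ideal.map_mono (Ideal.pow_le_self ht0)).trans hmS
  have hpow : maximalIdeal S ^ (2 * t) ≤ I := by
    rw [pow_mul, hI, Ideal.map_pow]
    exact Ideal.pow_right_mono hSm t
  have : IsArtinianRing (S ⧸ I) := by
    refine quotient_artinian_of_mem_minimalPrimes_of_isLocalRing I ⟨⟨inferInstance, hIle⟩, ?_⟩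
    intro P hP _
    have := hP.1
    exact Ideal.IsPrime.le_of_pow_le (hpow.trans hP.2)
  obtain ⟨n, w, hw⟩ := exists_finite_annihilator I {h : H | ∀ b ∈ maximalIdeal R ^ t, b • h = 0}
    (fun s hs x hx => by
      have : I ≤ LinearMap.ker (LinearMap.toSpanSingleton S H x) := by
        rw [hI, Ideal.map_le_iff_le_comap]
        intro b hb
        change algebraMap R S b • x = 0
        rw [algebraMap_smul]
        exact hx b hb
      exact this hs)
    (fun s hs => hφ.mem_map hE _ s hs)
  have hyI : ∀ s ∈ I, ∀ c, y (c * s) = 0 := by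
    intro s hs
    rw [hI, Ideal.map] at hs
    induction hs using Submodule.span_induction with
    | mem x hx =>
      obtain ⟨b, hb, rfl⟩ := hx
      intro c
      rw [mul_comm, ← Algebra.smul_def, map_smul]
      exact ht b hb _ ⟨c, rfl⟩
    | zero => intro c; rw [mul_zero, map_zero]
    | add x x' _ _ hx hx' => intro c; rw [mul_add, map_add, hx, hx', add_zero]
    | smul d x _ hx => intro c; rw [smul_eq_mul, ← mul_assoc, hx]
  obtain ⟨F, hF⟩ := exists_factor_of_injective hE (LinearMap.pi fun i : Fin n =>
    (LinearMap.toSpanSingleton S H (w i)).restrictScalars R) y fun s hs =>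
      one_mul s ▸ hyI s (hw s fun i => congrFun hs i) 1
  choose σ hσ _ using fun i => hφ (F.comp (LinearMap.single R (fun _ : Fin n => H) i))
  refine ⟨∑ i, σ i • w i, fun s => ?_⟩
  have : (LinearMap.pi fun i : Fin n =>
      (LinearMap.toSpanSingleton S H (w i)).restrictScalars R) s =
      ∑ i, Pi.single i (s • w i) := (Finset.univ_sum_single fun i => s • w i).symm
  rw [← hF s, this, map_sum, Finset.smul_sum, map_sum]
  refine Finset.sum_congr rfl fun i _ => ?_
  refine (hσ i (s • w i)).trans (congrArg φ ?_)
  rw [smul_comm]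

end SelfDuality

section SocleAndInjectivity

variable {R S E H : Type} [CommRing R] [IsLocalRing R] [IsNoetherianRing R] [CommRing S]
  [IsLocalRing S] [Algebra R S] [AddCommGroup E] [Module R E] [AddCommGroup H] [Module R H]
  [Module S H] [IsScalarTower R S H] {ω : Ideal R} {a : R} {re im : S →ₗ[R] R}
  {φ : H →ₗ[R] E}

/-- The socle of `H` is generated by the element `h₀` for which `s ↦ φ (s h₀)` is the functional
`S → S/𝔫 = R/𝔪 → E`. -/
theorem GeneratesDual.exists_socle (hφ : GeneratesDual S φ)
    (h : TwistedCoords ω a re im) (ham : a ∈ maximalIdeal R)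
    (hE : Module.Injective R E) (ι : ResidueField R →ₗ[R] E) (hι : Function.Injective ι)
    (hess : ∀ N : Submodule R E, N ⊓ LinearMap.range ι = ⊥ → N = ⊥) :
    ∃ h₀ : H, h₀ ≠ 0 ∧ (∀ s ∈ maximalIdeal S, s • h₀ = 0) ∧
      ∀ x : H, (∀ s ∈ maximalIdeal S, s • x = 0) → ∃ s : S, x = s • h₀ := by
  have := h.finite
  have := h.isNoetherianRing
  obtain ⟨h₀, hh₀⟩ := hφ.exists_eq hE ι hess (h.map_maximalIdeal_le ham) (h.maximalIdeal_sq_le ham)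
    (ι.comp ((Algebra.linearMap R (ResidueField R)).comp re))
  have hh₀ : ∀ s, ι (residue R (re s)) = φ (s • h₀) := hh₀
  refine ⟨h₀, ?_, fun s hs => hφ.eq_zero hE ι hι _ fun t => ?_, fun x hx => ?_⟩
  · rintro rfl
    have h1 := hh₀ 1
    rw [smul_zero, map_zero, h.re_one, map_one] at h1
    exact one_ne_zero (hι (h1.trans (map_zero ι).symm))
  · rw [smul_smul, ← hh₀]
    have : re (t * s) ∈ maximalIdeal R :=
      (h.mem_maximalIdeal_iff ham _).1 (Ideal.mul_mem_left _ t hs)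
    rw [(residue_eq_zero_iff _).2 this, map_zero]
  · obtain ⟨r, hr⟩ := socle_injHull ι hess (φ x) fun b hb => by
      rw [← map_smul, ← algebraMap_smul S b x,
        hx _ (h.map_maximalIdeal_le ham (Ideal.mem_map_of_mem _ hb)), map_zero]
    refine ⟨algebraMap R S r, sub_eq_zero.1 (hφ.eq_zero hE ι hι _ fun s => ?_)⟩
    have hs : s - algebraMap R S (re s) ∈ maximalIdeal S := by
      rw [h.mem_maximalIdeal_iff ham, map_sub, h.re_algebraMap, sub_self]
      exact zero_mem _
    have h1 : s • x = re s • x := by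
      have := hx _ hs
      rwa [sub_smul, algebraMap_smul, sub_eq_zero] at this
    rw [smul_sub, map_sub, h1, map_smul, hr, smul_smul, ← hh₀, ← map_smul, h.re_mul,
      h.re_algebraMap, h.im_algebraMap, mul_zero, mul_zero, add_zero, map_mul, Algebra.smul_def,
      ResidueField.algebraMap_eq, sub_self]

/-- Baer's criterion holds for `H`, because `S`-linear maps `I → H` correspond to functionals
on `I`, which extend to `S`. -/
theorem GeneratesDual.injective (hφ : GeneratesDual S φ)
    (h : TwistedCoords ω a re im) (ham : a ∈ maximalIdeal R)
    (hE : Module.Injective R E) (ι : ResidueField R →ₗ[R] E) (hι : Function.Injective ι)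
    (hess : ∀ N : Submodule R E, N ⊓ LinearMap.range ι = ⊥ → N = ⊥) :
    Module.Injective S H := by
  have := h.finite
  have := h.isNoetherianRing
  refine Module.Baer.injective fun I g => ?_
  obtain ⟨y, hy⟩ := exists_factor_of_injective hE (I.subtype.restrictScalars R)
    (φ.comp (g.restrictScalars R)) fun x hx => by
      have : x = 0 := Subtype.ext hx
      rw [this, map_zero]
  obtain ⟨w, hw⟩ := hφ.exists_eq hE ι hess (h.map_maximalIdeal_le ham)
    (h.maximalIdeal_sq_le ham) y
  refine ⟨LinearMap.toSpanSingleton S H w, fun x hx => ?_⟩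
  rw [LinearMap.toSpanSingleton_apply]
  refine sub_eq_zero.1 (hφ.eq_zero hE ι hι _ fun s => ?_)
  have h1 : y (s * x) = φ (g (s • ⟨x, hx⟩)) := hy (s • ⟨x, hx⟩)
  rw [smul_sub, map_sub, smul_smul, ← hw, h1, map_smul, sub_self]

/-- Every element of `H` is `𝔫`-power torsion, since `s ↦ φ (s x)` is killed by a power of `𝔪`. -/
theorem GeneratesDual.torsion (hφ : GeneratesDual S φ)
    (h : TwistedCoords ω a re im) (ham : a ∈ maximalIdeal R)
    (hE : Module.Injective R E) (ι : ResidueField R →ₗ[R] E) (hι : Function.Injective ι)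
    (hess : ∀ N : Submodule R E, N ⊓ LinearMap.range ι = ⊥ → N = ⊥) (x : H) :
    ∃ k, ∀ s ∈ maximalIdeal S ^ k, s • x = 0 := by
  have := h.finite
  let y : S →ₗ[R] E := φ.comp ((LinearMap.toSpanSingleton S H x).restrictScalars R)
  obtain ⟨t, -, ht⟩ := exists_pow_smul_eq_zero_of_injHull ι hess (LinearMap.range y)
    (LinearMap.range_eq_map y ▸ Module.Finite.fg_top.map y)
  have hle : maximalIdeal S ^ (2 * t) ≤ LinearMap.ker (LinearMap.toSpanSingleton S H x) := by
    rw [pow_mul]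
    refine (Ideal.pow_right_mono (h.maximalIdeal_sq_le ham) t).trans ?_
    rw [← Ideal.map_pow, Ideal.map_le_iff_le_comap]
    intro b hb
    change algebraMap R S b • x = 0
    refine hφ.eq_zero hE ι hι _ fun s => ?_
    rw [algebraMap_smul, smul_comm, map_smul]
    exact ht b hb _ ⟨s, rfl⟩
  exact ⟨2 * t, fun s hs => hle hs⟩

omit [IsLocalRing R] [IsNoetherianRing R] [Algebra R S] [Module R H] [IsScalarTower R S H] in
/-- A nonzero `𝔫`-power torsion element has a nonzero multiple in the socle. -/
theorem exists_socle_multiple {x : H} (hx : x ≠ 0)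
    (htor : ∃ k, ∀ s ∈ maximalIdeal S ^ k, s • x = 0) :
    ∃ s : S, s • x ≠ 0 ∧ ∀ p ∈ maximalIdeal S, p • s • x = 0 := by
  classical
  obtain ⟨k, hk⟩ : ∃ k, Nat.find htor = k + 1 := by
    refine Nat.exists_eq_succ_of_ne_zero fun h0 => hx ?_
    have := Nat.find_spec htor
    rw [h0] at this
    simpa using this 1 (by simp)
  have hmin := Nat.find_min htor (m := k) (by omega)
  push Not at hmin
  obtain ⟨s, hs, hsx⟩ := hmin
  refine ⟨s, hsx, fun p hp => ?_⟩
  rw [smul_smul]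
  refine Nat.find_spec htor _ ?_
  rw [hk, pow_succ']
  exact Ideal.mul_mem_mul hp hs

/-- `H` is injective and an essential extension of its simple socle, hence isomorphic to every
injective hull `E'` of the residue field of `S`. -/
theorem GeneratesDual.equiv_injHull (hφ : GeneratesDual S φ)
    (h : TwistedCoords ω a re im) (ham : a ∈ maximalIdeal R)
    (hE : Module.Injective R E) (ι : ResidueField R →ₗ[R] E) (hι : Function.Injective ι)
    (hess : ∀ N : Submodule R E, N ⊓ LinearMap.range ι = ⊥ → N = ⊥)
    {E' : Type} [AddCommGroup E'] [Module S E'] (hE' : IsInjHull S (ResidueField S) E') :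
    Nonempty (H ≃ₗ[S] E') := by
  obtain ⟨h₀, hne, hkill, hgen⟩ := hφ.exists_socle h ham hE ι hι hess
  have hinj := hφ.injective h ham hE ι hι hess
  obtain ⟨hE', ι', hι', hess'⟩ := hE'
  have hres : ∀ s : S, s • ι' 1 = 0 → s ∈ maximalIdeal S := fun s hs => by
    rw [← map_smul] at hs
    have h1 := hι' (hs.trans (map_zero ι').symm)
    rw [Algebra.smul_def, mul_one] at h1
    exact (residue_eq_zero_iff s).1 h1
  obtain ⟨L, hL⟩ := exists_factor_of_injective hinj (LinearMap.toSpanSingleton S E' (ι' 1))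
    (LinearMap.toSpanSingleton S H h₀) fun s hs => hkill s (hres s hs)
  have hL : ∀ s : S, L (s • ι' 1) = s • h₀ := hL
  have hker : LinearMap.ker L = ⊥ := by
    refine hess' _ (eq_bot_iff.2 ?_)
    rintro _ ⟨hx, ⟨c, rfl⟩⟩
    obtain ⟨s, rfl⟩ := residue_surjective c
    have e : ι' (residue S s) = s • ι' 1 := by
      rw [← map_smul, Algebra.smul_def, mul_one]; rfl
    have hx : L (ι' (residue S s)) = 0 := hx
    rw [e, hL] at hx
    have hs : s ∈ maximalIdeal S := fun hu => hne (hu.smul_eq_zero.1 hx)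
    rw [(residue_eq_zero_iff s).2 hs, map_zero]
    exact zero_mem _
  obtain ⟨P, hP⟩ := exists_factor_of_injective hE' L LinearMap.id fun x hx =>
    LinearMap.ker_eq_bot'.1 hker x hx
  refine ⟨LinearEquiv.ofBijective P ⟨(injective_iff_map_eq_zero P).2 fun x hx => ?_,
    fun x => ⟨L x, hP x⟩⟩⟩
  by_contra hx0
  obtain ⟨s, hs, hs'⟩ := exists_socle_multiple hx0 (hφ.torsion h ham hE ι hι hess x)
  obtain ⟨t, ht⟩ := hgen _ hs'
  have h1 : P (s • x) = t • ι' 1 := by rw [ht, ← hL, hP]; rfl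
  rw [map_smul, hx, smul_zero] at h1
  exact hs (by rw [ht, hkill t (hres t h1.symm)])

end SocleAndInjectivity

/-- The three conclusions for any `S`-module `H ≅ S ⊗ T`, where `T` has `R`-dual `ω`. -/
theorem TwistedCoords.dual_socle_injHull {R S : Type} [CommRing R] [IsLocalRing R] [CommRing S]
    [IsLocalRing S] [Algebra R S] {ω : Ideal R} {a : R} {re im : S →ₗ[R] R}
    (h : TwistedCoords ω a re im) [IsDomain R] [IsNoetherianRing R] [IsIntegrallyClosed R]
    (hω : ω ≠ ⊥) (ham : a ∈ maximalIdeal R)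
    {E T H : Type} [AddCommGroup E] [Module R E] [AddCommGroup T] [Module R T]
    [AddCommGroup H] [Module R H] [Module S H] [IsScalarTower R S H]
    (hE : IsInjHull R (ResidueField R) E) (κ : (T →ₗ[R] E) ≃ₗ[R] ω)
    (ε : H ≃ₗ[S] TensorProduct R S T) :
    (∃ e : (H →ₗ[R] E) ≃ S, (∀ f g, e (f + g) = e f + e g) ∧
      ∀ (s : S) (f g : H →ₗ[R] E), (∀ x, g x = f (s • x)) → e g = s * e f) ∧
    (∃ h₀ : H, h₀ ≠ 0 ∧ (∀ s ∈ maximalIdeal S, s • h₀ = 0) ∧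
      ∀ x : H, (∀ s ∈ maximalIdeal S, s • x = 0) → ∃ s : S, x = s • h₀) ∧
    ∀ (E' : Type) (_ : AddCommGroup E') (_ : Module S E'),
      IsInjHull S (ResidueField S) E' → Nonempty (H ≃ₗ[S] E') := by
  obtain ⟨hEi, ι, hι, hess⟩ := hE
  obtain ⟨e, hadd, he⟩ := h.exists_dual_equiv hω κ ε
  obtain ⟨φ, hφ⟩ := exists_generatesDual e he
  exact ⟨⟨e, hadd, he⟩, hφ.exists_socle h ham hEi ι hι hess,
    fun E' _ _ hull => hφ.equiv_injHull h ham hEi ι hι hess hull⟩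

/-- Let `(R, 𝔪)` be a complete Noetherian local (normal) domain of
dimension `d` with canonical module realized as an ideal `ω ⊆ R` (i.e. `ω` is the Matlis
dual of `H^d_𝔪(R)`), and let `(S, 𝔫)` be `R ⊕ ω` with the twisted multiplication
`(r,x)(r',x') = (rr' + xx'a, rx' + r'x)` for `a ∈ 𝔪` without square root in `Frac(R)`,
realized as the image `{r + x·X : r ∈ R, x ∈ ω}` of an `R`-algebra embedding
`j : S → R[X]/(X² - a)`.  Then `Hom_R(H^d_𝔫(S), E(R/𝔪)) ≅ S` as `S`-modules (the
`S`-action on the `Hom`-module being through the first argument); consequently the socle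
of `H^d_𝔫(S)` is one-dimensional and `S` is quasi-Gorenstein: `H^d_𝔫(S) ≅ E_S(S/𝔫)`. -/
theorem stmt_14 (R : Type) [CommRing R] [IsDomain R] [IsNoetherianRing R] [IsLocalRing R]
    [IsIntegrallyClosed R] [IsAdicComplete (maximalIdeal R) R]
    (d : ℕ) (hdim : ringKrullDim R = d)
    (ω : Ideal R) (hω : ω ≠ ⊥)
    (a : R) (ham : a ∈ maximalIdeal R)
    (ha : ¬∃ q : FractionRing R, q ^ 2 = algebraMap R (FractionRing R) a)
    (S : Type) [CommRing S] [IsLocalRing S] [Algebra R S]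
    (j : S →ₐ[R] (R[X] ⧸ Ideal.span {(X : R[X]) ^ 2 - C a}))
    (hj : Function.Injective j)
    (hrange : Set.range j =
      {y | ∃ r x', x' ∈ ω ∧ y = Ideal.Quotient.mk _ (C r + C x' * X)})
    (E : Type) [AddCommGroup E] [Module R E]
    (hE : IsInjHull R (ResidueField R) E)
    (hcan : Nonempty
      ((((localCohomology (maximalIdeal R) d).obj (ModuleCat.of R R)) →ₗ[R] E) ≃ₗ[R] ω)) :
    (∃ e : ((RestrictScalars R S
          ((localCohomology (maximalIdeal S) d).obj (ModuleCat.of S S))) →ₗ[R] E) ≃ S,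
        (∀ f g, e (f + g) = e f + e g) ∧
        (∀ (s : S) (f g : (RestrictScalars R S
            ((localCohomology (maximalIdeal S) d).obj (ModuleCat.of S S))) →ₗ[R] E),
          (∀ h, g h = f (s • h)) → e g = s * e f)) ∧
    (∃ h₀ : (RestrictScalars R S
          ((localCohomology (maximalIdeal S) d).obj (ModuleCat.of S S))),
        h₀ ≠ 0 ∧ (∀ s ∈ maximalIdeal S, s • h₀ = 0) ∧
        ∀ h, (∀ s ∈ maximalIdeal S, s • h = 0) → ∃ s : S, h = s • h₀) ∧
    (∀ (E' : Type) (_ : AddCommGroup E') (_ : Module S E'),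
      IsInjHull S (ResidueField S) E' →
        Nonempty
          (((localCohomology (maximalIdeal S) d).obj (ModuleCat.of S S)) ≃ₗ[S] E')) := by
  obtain ⟨re, im, h⟩ := exists_twistedCoords ω a j hj hrange
  obtain ⟨κ⟩ := hcan
  -- In dimension zero `R` is a field, and then `a = 0` is a square.
  have hd : d ≠ 0 := by
    rintro rfl
    obtain ⟨l, hl, -, k, hk⟩ := exists_systemOfParameters R 0 hdim
    obtain rfl := List.length_eq_zero_iff.1 hl
    have hak : a ^ k = 0 := by simpa using hk (Ideal.pow_mem_pow ham k)
    have ha0 : a = 0 := eq_zero_of_pow_eq_zero hak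
    exact ha ⟨0, by simp [ha0]⟩
  obtain ⟨ε⟩ := h.exists_localCohomology_equiv ham hd hdim
  let L := (localCohomology (maximalIdeal S) d).obj (ModuleCat.of S S)
  let i₁ : AddCommGroup (RestrictScalars R S L) := inferInstance
  let i₂ : Module R (RestrictScalars R S L) := RestrictScalars.module R S L
  let i₃ : Module S (RestrictScalars R S L) := inferInstance
  -- The `R`-structure on `L` lives only on the synonym `RestrictScalars R S L`; elaborating `ε`
  -- first would select the structures of `L` itself, so the instances are passed explicitly.
  exact @TwistedCoords.dual_socle_injHull R S _ _ _ _ _ ω a re im h _ _ _ hω ham E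
    ((localCohomology (maximalIdeal R) d).obj (ModuleCat.of R R)) (RestrictScalars R S L)
    _ _ _ _ i₁ i₂ i₃ (RestrictScalars.isScalarTower R S L) hE κ ε
end
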